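/- arXiv:math/0703517 — 5 statements merged into one kernel-verified Lean document; each statement's English description precedes it below -/
import Mathlib

section
/- There exists a constant Λ > 0 such that for every t ∈ [0,1] and every x ∈ (0,1) one has x·(1−x)·G_t''(x) > Λ, and also x·(1−x)·G_P''(x) > Λ. -/
open Set Filter

noncomputable def GP : ℝ → ℝ := fun x => x * Real.log x + (1 - x) * Real.log (1 - x)

noncomputable def Gt (f0 f1 : ℝ → ℝ) (t : ℝ) : ℝ → ℝ :=
  fun x => GP x + ((1 - t) * f0 x + t * f1 x)

noncomputable def Phase (G : ℝ → ℝ) (α : ℝ) : ℝ → ℝ :=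
  fun x => (x - α) * deriv G x - (G x - G α)

noncomputable def Qnorm (G : ℝ → ℝ) (N : ℕ) (α : ℝ) : ℝ :=
  2 * Real.pi * ∫ x in (0:ℝ)..1, Real.exp (-(N : ℝ) * Phase G α x)

noncomputable def RPhase (G : ℝ → ℝ) (α : ℝ) : ℝ → ℝ :=
  fun y => (1 / α) * Phase G α (α * (1 + y))

noncomputable def Leg (G : ℝ → ℝ) (S : Set ℝ) : ℝ → ℝ :=
  fun ρ => sSup ((fun x => x * ρ - G x) '' S)

noncomputable def QQ (G : ℝ → ℝ) (N : ℕ) (α : ℝ) : ℝ :=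
  Qnorm G N α * Real.exp ((N : ℝ) * G α)

lemma GP_hasDeriv {x : ℝ} (hx : x ∈ Set.Ioo (0:ℝ) 1) :
    HasDerivAt GP (Real.log x - Real.log (1 - x)) x := by
  have h0 : x ≠ 0 := hx.1.ne'
  have h1 : 1 - x ≠ 0 := (sub_pos.2 hx.2).ne'
  have hid : HasDerivAt (fun y : ℝ => 1 - y) (-1) x := by
    simpa using (hasDerivAt_id x).const_sub 1
  have h := ((hasDerivAt_id x).mul (Real.hasDerivAt_log h0)).add (hid.mul (hid.log h1))
  refine h.congr_deriv ?_
  simp only [id]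
  field_simp
  ring

lemma GP_hasDeriv2 {x : ℝ} (hx : x ∈ Set.Ioo (0:ℝ) 1) :
    HasDerivAt (fun y => Real.log y - Real.log (1 - y)) (1 / (x * (1 - x))) x := by
  have h0 : x ≠ 0 := hx.1.ne'
  have h1 : 1 - x ≠ 0 := (sub_pos.2 hx.2).ne'
  have hid : HasDerivAt (fun y : ℝ => 1 - y) (-1) x := by
    simpa using (hasDerivAt_id x).const_sub 1
  refine ((Real.hasDerivAt_log h0).sub (hid.log h1)).congr_deriv ?_
  field_simp
  ring

lemma GP_add_iter (g : ℝ → ℝ) (hg : ContDiff ℝ 2 g) {x : ℝ} (hx : x ∈ Set.Ioo (0:ℝ) 1) :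
    x * (1 - x) * iteratedDeriv 2 (fun y => GP y + g y) x
      = 1 + x * (1 - x) * iteratedDeriv 2 g x := by
  have h0 : x ≠ 0 := hx.1.ne'
  have h1 : 1 - x ≠ 0 := (sub_pos.2 hx.2).ne'
  have hd : Differentiable ℝ g := hg.differentiable (by norm_num)
  have hd2 : Differentiable ℝ (deriv g) := by
    have := hg.differentiable_iteratedDeriv 1 (by norm_num)
    rwa [iteratedDeriv_one] at this
  have hE : deriv (fun y => GP y + g y) =ᶠ[nhds x]
      fun y => (Real.log y - Real.log (1 - y)) + deriv g y := by
    filter_upwards [isOpen_Ioo.mem_nhds hx] with y hy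
    exact ((GP_hasDeriv hy).add (hd y).hasDerivAt).deriv
  rw [iteratedDeriv_succ, iteratedDeriv_one, hE.deriv_eq,
    ((GP_hasDeriv2 hx).fun_add (hd2 x).hasDerivAt).deriv, iteratedDeriv_succ, iteratedDeriv_one]
  field_simp

lemma exists_lower (g : ℝ → ℝ) (hg : ContDiff ℝ 2 g)
    (hpos : ∀ x ∈ Set.Ioo (0:ℝ) 1, 0 < iteratedDeriv 2 (fun y => GP y + g y) x) :
    ∃ m : ℝ, 0 < m ∧ ∀ x ∈ Set.Icc (0:ℝ) 1, m ≤ 1 + x * (1 - x) * iteratedDeriv 2 g x := by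
  have hc : Continuous fun x : ℝ => 1 + x * (1 - x) * iteratedDeriv 2 g x := by
    have := hg.continuous_iteratedDeriv 2 le_rfl
    fun_prop
  obtain ⟨z, hz, hmin⟩ := isCompact_Icc.exists_isMinOn
    (Set.nonempty_Icc.2 (zero_le_one (α := ℝ))) hc.continuousOn
  refine ⟨_, ?_, fun x hx => hmin hx⟩
  rcases eq_or_lt_of_le hz.1 with h | h
  · simp [← h]
  rcases eq_or_lt_of_le hz.2 with h' | h'
  · simp [h']
  beta_reduce
  rw [← GP_add_iter g hg ⟨h, h'⟩]
  exact mul_pos (mul_pos h (sub_pos.2 h')) (hpos z ⟨h, h'⟩)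

theorem bergman_cp1_lemma_bound1
    (f0 f1 : ℝ → ℝ) (hf0 : ContDiff ℝ (⊤ : ℕ∞) f0) (hf1 : ContDiff ℝ (⊤ : ℕ∞) f1)
    (hG0 : ∀ x ∈ Set.Ioo (0:ℝ) 1, 0 < iteratedDeriv 2 (Gt f0 f1 0) x)
    (hG1 : ∀ x ∈ Set.Ioo (0:ℝ) 1, 0 < iteratedDeriv 2 (Gt f0 f1 1) x) :
    ∃ Λ : ℝ, 0 < Λ ∧ ∀ t ∈ Set.Icc (0:ℝ) 1, ∀ x ∈ Set.Ioo (0:ℝ) 1,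
      Λ < x * (1 - x) * iteratedDeriv 2 (Gt f0 f1 t) x ∧
      Λ < x * (1 - x) * iteratedDeriv 2 GP x := by
  have h20 : ContDiff ℝ 2 f0 := contDiff_infty.1 hf0 2
  have h21 : ContDiff ℝ 2 f1 := contDiff_infty.1 hf1 2
  have e0 : Gt f0 f1 0 = fun y => GP y + f0 y := by funext y; simp [Gt]
  have e1 : Gt f0 f1 1 = fun y => GP y + f1 y := by funext y; simp [Gt]
  rw [e0] at hG0
  rw [e1] at hG1
  obtain ⟨m0, hm0, H0⟩ := exists_lower f0 h20 hG0
  obtain ⟨m1, hm1, H1⟩ := exists_lower f1 h21 hG1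
  have hm : 0 < min m0 m1 := lt_min hm0 hm1
  refine ⟨min m0 m1 / 2, by linarith, fun t ht x hx => ⟨?_, ?_⟩⟩
  · have hc0 : ContDiff ℝ 2 (fun y => (1 - t) * f0 y) := contDiff_const.mul h20
    have hc1 : ContDiff ℝ 2 (fun y => t * f1 y) := contDiff_const.mul h21
    have h := GP_add_iter (fun y => (1 - t) * f0 y + t * f1 y) (hc0.add hc1) hx
    have hsum : iteratedDeriv 2 (fun y => (1 - t) * f0 y + t * f1 y) x
        = (1 - t) * iteratedDeriv 2 f0 x + t * iteratedDeriv 2 f1 x := by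
      rw [iteratedDeriv_fun_add hc0.contDiffAt hc1.contDiffAt,
        iteratedDeriv_const_mul_field, iteratedDeriv_const_mul_field]
    rw [hsum] at h
    have a0 := (min_le_left m0 m1).trans (H0 x (Ioo_subset_Icc_self hx))
    have a1 := (min_le_right m0 m1).trans (H1 x (Ioo_subset_Icc_self hx))
    have b0 := mul_le_mul_of_nonneg_left a0 (sub_nonneg.2 ht.2)
    have b1 := mul_le_mul_of_nonneg_left a1 ht.1
    change _ < x * (1 - x) * iteratedDeriv 2 (fun y => GP y + ((1 - t) * f0 y + t * f1 y)) x
    rw [h]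
    nlinarith
  · have h := GP_add_iter (fun _ => 0) contDiff_const hx
    have hz := (min_le_left m0 m1).trans (H0 0 (by simp))
    simp at h hz
    have hz' : min m0 m1 ≤ 1 := by simpa using hz
    rw [h]
    linarith
end

section
/- For every y_0 > 0 there exists a constant c = c(y_0) > 0, independent of t ∈ [0,1] and α ∈ (0,1), such that 𝓕_{t,α}'(y) ≥ c for all y ∈ [y_0, 1/α − 1); and for every y_0 ∈ (−1, 0) there exists c = c(y_0) > 0, independent of t and α, such that 𝓕_{t,α}'(y) ≤ −c for all y ∈ (−1, y_0]. -/
open Set Filter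

lemma aux_d1 (f : ℝ → ℝ) (hf : ContDiff ℝ (⊤ : ℕ∞) f) {x : ℝ} (hx : x ∈ Set.Ioo (0:ℝ) 1) :
    HasDerivAt (fun x => GP x + f x) (Real.log x - Real.log (1 - x) + deriv f x) x := by
  have h0 : x ≠ 0 := hx.1.ne'
  have h1 : 1 - x ≠ 0 := by linarith [hx.2]
  have hfd : HasDerivAt f (deriv f x) x := (hf.differentiable (by simp) x).hasDerivAt
  have hs : HasDerivAt (fun x : ℝ => 1 - x) (-1) x := by
    simpa using (hasDerivAt_id x).const_sub 1
  have a := (hasDerivAt_id x).mul (Real.hasDerivAt_log h0)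
  have b := hs.mul (hs.log h1)
  have h := (a.add b).add hfd
  refine HasDerivAt.congr_deriv (f := fun x => GP x + f x) h ?_
  simp only [id]
  field_simp
  ring

lemma aux_d2 (f : ℝ → ℝ) (hf : ContDiff ℝ (⊤ : ℕ∞) f) {x : ℝ} (hx : x ∈ Set.Ioo (0:ℝ) 1) :
    HasDerivAt (deriv (fun x => GP x + f x)) (1 / x + 1 / (1 - x) + deriv (deriv f) x) x := by
  have h0 : x ≠ 0 := hx.1.ne'
  have h1 : 1 - x ≠ 0 := by linarith [hx.2]
  have hf' : ContDiff ℝ (⊤ : ℕ∞) (deriv f) := (contDiff_infty_iff_deriv.1 hf).2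
  have hfd : HasDerivAt (deriv f) (deriv (deriv f) x) x :=
    (hf'.differentiable (by simp) x).hasDerivAt
  have hs : HasDerivAt (fun x : ℝ => 1 - x) (-1) x := by
    simpa using (hasDerivAt_id x).const_sub 1
  have h := ((Real.hasDerivAt_log h0).sub (hs.log h1)).add hfd
  have he : deriv (fun x => GP x + f x) =ᶠ[nhds x]
      fun x => Real.log x - Real.log (1 - x) + deriv f x := by
    filter_upwards [isOpen_Ioo.mem_nhds hx] with z hz
    exact (aux_d1 f hf hz).deriv
  refine HasDerivAt.congr_of_eventuallyEq ?_ he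
  refine HasDerivAt.congr_deriv h ?_
  field_simp
  ring

lemma aux_low (f : ℝ → ℝ) (hf : ContDiff ℝ (⊤ : ℕ∞) f)
    (hG : ∀ x ∈ Set.Ioo (0:ℝ) 1, 0 < iteratedDeriv 2 (fun x => GP x + f x) x) :
    ∃ c : ℝ, 0 < c ∧ ∀ x ∈ Set.Ioo (0:ℝ) 1, c ≤ 1 + x * (1 - x) * deriv (deriv f) x := by
  have hf' : ContDiff ℝ (⊤ : ℕ∞) (deriv f) := (contDiff_infty_iff_deriv.1 hf).2
  have hf'' : Continuous (deriv (deriv f)) := (contDiff_infty_iff_deriv.1 hf').2.continuous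
  have hc : ContinuousOn (fun x => 1 + x * (1 - x) * deriv (deriv f) x) (Set.Icc (0:ℝ) 1) := by
    fun_prop
  obtain ⟨z, hz, hm⟩ := isCompact_Icc.exists_isMinOn (Set.nonempty_Icc.2 zero_le_one) hc
  refine ⟨_, ?_, fun x hx => hm (Set.Ioo_subset_Icc_self hx)⟩
  rcases eq_or_lt_of_le hz.1 with h | h
  · subst h; norm_num
  rcases eq_or_lt_of_le hz.2 with h' | h'
  · subst h'; norm_num
  have := hG z ⟨h, h'⟩
  rw [iteratedDeriv_succ, iteratedDeriv_one, (aux_d2 f hf ⟨h, h'⟩).deriv] at this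
  have h1 : 0 < 1 - z := by linarith
  have := mul_pos (mul_pos h h1) this
  have e : z * (1 - z) * (1 / z + 1 / (1 - z) + deriv (deriv f) z)
      = 1 + z * (1 - z) * deriv (deriv f) z := by
    field_simp
    ring
  rw [e] at this
  exact this

lemma aux_deriv (f : ℝ → ℝ) (hf : ContDiff ℝ (⊤ : ℕ∞) f) {α y : ℝ} (hα : 0 < α)
    (hy : -1 < y) (hx : α * (1 + y) < 1) :
    deriv (RPhase (fun x => GP x + f x) α) y = y / (1 + y) * (1 / (1 - α * (1 + y)) *
      (1 + (α * (1 + y)) * (1 - α * (1 + y)) * deriv (deriv f) (α * (1 + y)))) := by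
  have hy' : 0 < 1 + y := by linarith
  have hx0 : α * (1 + y) ∈ Set.Ioo (0:ℝ) 1 := ⟨mul_pos hα hy', hx⟩
  have d1 := aux_d1 f hf hx0
  rw [← d1.deriv] at d1
  have d2 := aux_d2 f hf hx0
  have hP := (((hasDerivAt_id (α * (1 + y))).sub_const α).mul d2).sub
    (d1.sub_const (GP α + f α))
  have hi : HasDerivAt (fun y : ℝ => α * (1 + y)) α y := by
    simpa using ((hasDerivAt_id y).const_add 1).const_mul α
  have h := (HasDerivAt.comp y hP hi).const_mul (1 / α)
  have h' : deriv (RPhase (fun x => GP x + f x) α) y = _ := h.deriv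
  rw [h']
  have h1 : 1 - α * (1 + y) ≠ 0 := by linarith
  simp only [id]
  field_simp
  ring

theorem bergman_cp1_rescaled_phase_uniform_derivative_bounds
    (f0 f1 : ℝ → ℝ) (hf0 : ContDiff ℝ (⊤ : ℕ∞) f0) (hf1 : ContDiff ℝ (⊤ : ℕ∞) f1)
    (hG0 : ∀ x ∈ Set.Ioo (0:ℝ) 1, 0 < iteratedDeriv 2 (Gt f0 f1 0) x)
    (hG1 : ∀ x ∈ Set.Ioo (0:ℝ) 1, 0 < iteratedDeriv 2 (Gt f0 f1 1) x) :
    (∀ y₀ : ℝ, 0 < y₀ → ∃ c : ℝ, 0 < c ∧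
      ∀ t ∈ Set.Icc (0:ℝ) 1, ∀ α ∈ Set.Ioo (0:ℝ) 1, ∀ y : ℝ,
        y₀ ≤ y → y < 1 / α - 1 → c ≤ deriv (RPhase (Gt f0 f1 t) α) y) ∧
    (∀ y₀ : ℝ, -1 < y₀ → y₀ < 0 → ∃ c : ℝ, 0 < c ∧
      ∀ t ∈ Set.Icc (0:ℝ) 1, ∀ α ∈ Set.Ioo (0:ℝ) 1, ∀ y : ℝ,
        -1 < y → y ≤ y₀ → deriv (RPhase (Gt f0 f1 t) α) y ≤ -c) := by
  have e0 : Gt f0 f1 0 = fun x => GP x + f0 x := by funext x; simp [Gt]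
  have e1 : Gt f0 f1 1 = fun x => GP x + f1 x := by funext x; simp [Gt]
  rw [e0] at hG0
  rw [e1] at hG1
  obtain ⟨a, ha, hA⟩ := aux_low f0 hf0 hG0
  obtain ⟨b, hb, hB⟩ := aux_low f1 hf1 hG1
  have key : ∀ t ∈ Set.Icc (0:ℝ) 1, ∀ α ∈ Set.Ioo (0:ℝ) 1, ∀ y : ℝ, -1 < y → α * (1 + y) < 1 →
      ∃ K, min a b ≤ K ∧ deriv (RPhase (Gt f0 f1 t) α) y = y / (1 + y) * K := by
    intro t ht α hα y hy hx
    have hft : ContDiff ℝ (⊤ : ℕ∞) (fun x => (1 - t) * f0 x + t * f1 x) := by fun_prop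
    refine ⟨_, ?_, aux_deriv _ hft hα.1 hy hx⟩
    have hx0 : 0 < α * (1 + y) := mul_pos hα.1 (by linarith)
    generalize α * (1 + y) = x at hx hx0
    have hA := hA x ⟨hx0, hx⟩
    have hB := hB x ⟨hx0, hx⟩
    have hd0 : Differentiable ℝ f0 := hf0.differentiable (by simp)
    have hd1 : Differentiable ℝ f1 := hf1.differentiable (by simp)
    have hd0' : Differentiable ℝ (deriv f0) :=
      (contDiff_infty_iff_deriv.1 hf0).2.differentiable (by simp)
    have hd1' : Differentiable ℝ (deriv f1) :=
      (contDiff_infty_iff_deriv.1 hf1).2.differentiable (by simp)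
    have ed : deriv (fun x => (1 - t) * f0 x + t * f1 x)
        = fun x => (1 - t) * deriv f0 x + t * deriv f1 x := by
      funext z
      exact (((hd0 z).hasDerivAt.const_mul (1 - t)).add ((hd1 z).hasDerivAt.const_mul t)).deriv
    have edd : deriv (deriv (fun x => (1 - t) * f0 x + t * f1 x)) x
        = (1 - t) * deriv (deriv f0) x + t * deriv (deriv f1) x := by
      rw [ed]
      exact (((hd0' x).hasDerivAt.const_mul (1 - t)).add ((hd1' x).hasDerivAt.const_mul t)).deriv
    rw [edd]
    have hm : 0 < min a b := lt_min ha hb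
    have hH : min a b ≤ 1 + x * (1 - x) *
        ((1 - t) * deriv (deriv f0) x + t * deriv (deriv f1) x) := by
      have h1 := mul_le_mul_of_nonneg_left ((min_le_left a b).trans hA) (sub_nonneg.2 ht.2)
      have h2 := mul_le_mul_of_nonneg_left ((min_le_right a b).trans hB) ht.1
      linarith
    have hone : 1 ≤ 1 / (1 - x) := by
      rw [le_div_iff₀ (by linarith)]; linarith
    nlinarith
  have hm : 0 < min a b := lt_min ha hb
  constructor
  · intro y₀ hy₀
    refine ⟨y₀ / (1 + y₀) * min a b, by positivity, ?_⟩
    intro t ht α hα y hy hy1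
    have hx : α * (1 + y) < 1 := by
      have : 1 + y < 1 / α := by linarith
      rw [lt_div_iff₀ hα.1] at this
      linarith
    obtain ⟨K, hK, e⟩ := key t ht α hα y (by linarith) hx
    rw [e]
    have : y₀ / (1 + y₀) ≤ y / (1 + y) := by
      rw [div_le_div_iff₀ (by linarith) (by linarith)]; linarith
    have h0 : 0 < y₀ / (1 + y₀) := by positivity
    exact mul_le_mul this hK hm.le (h0.le.trans this)
  · intro y₀ hy₀ hy₀'
    have h0 : 0 < (-y₀) / (1 + y₀) := div_pos (by linarith) (by linarith)
    refine ⟨(-y₀) / (1 + y₀) * min a b, by positivity, ?_⟩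
    intro t ht α hα y hy hy1
    have hx : α * (1 + y) < 1 := by nlinarith [hα.1, hα.2]
    obtain ⟨K, hK, e⟩ := key t ht α hα y hy hx
    rw [e]
    have : (-y₀) / (1 + y₀) ≤ (-y) / (1 + y) := by
      rw [div_le_div_iff₀ (by linarith) (by linarith)]; linarith
    have := mul_le_mul this hK hm.le (h0.le.trans this)
    rw [neg_div (1 + y) y] at this
    linarith
end

section
/- There exist constants δ > 0 and C > 0 such that for all integers N ≥ 1, all t ∈ [0,1], and all α ∈ (0, 1/2), setting M := N·α, one has |1 − (2π·α·∫_{−1/2}^{1} e^{−M·𝓕_{t,α}(y)} dy)/Q_t^N(α)| ≤ C·e^{−δ·M}/M. -/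
open Set Filter

lemma aux_mono {f f' : ℝ → ℝ} {a b : ℝ} (hab : a ≤ b)
    (hd : ∀ x ∈ Icc a b, HasDerivAt f (f' x) x) (hn : ∀ x ∈ Icc a b, 0 ≤ f' x) : f a ≤ f b := by
  have := monotoneOn_of_deriv_nonneg (convex_Icc a b) (f := f)
    (fun x hx => (hd x hx).continuousAt.continuousWithinAt)
    (fun x hx => (hd x (interior_subset hx)).differentiableAt.differentiableWithinAt)
    (fun x hx => by rw [(hd x (interior_subset hx)).deriv]; exact hn x (interior_subset hx))
  exact this (left_mem_Icc.2 hab) (right_mem_Icc.2 hab) hab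

lemma aux_left {F g : ℝ → ℝ} {α c : ℝ} (hα : α ∈ Ioo (0:ℝ) (1/2)) (hc : 0 < c)
    (hF : ∀ x ∈ Ioo (0:ℝ) 1, HasDerivAt F ((x - α) * g x) x) (hF0 : F α = 0)
    (hg : ∀ x ∈ Ioo (0:ℝ) 1, c / x ≤ g x) {x : ℝ} (hx0 : 0 < x) (hx : x ≤ α) :
    c / (2 * α) * (x - α) ^ 2 ≤ F x := by
  obtain ⟨h0, h1⟩ := hα
  have := aux_mono (f := fun s => c / (2 * α) * (s - α) ^ 2 - F s)
    (f' := fun s => c / (2 * α) * (2 * (s - α)) - (s - α) * g s) hx ?_ ?_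
  · simp only [hF0, sub_self] at this
    norm_num at this
    linarith
  · intro s hs
    have h2 := ((((hasDerivAt_id s).sub_const α).pow 2).const_mul (c / (2 * α))).sub
      (hF s ⟨by linarith [hs.1], by linarith [hs.2]⟩)
    exact HasDerivAt.congr_deriv h2 (by simp)
  · intro s hs
    have hs0 : 0 < s := by linarith [hs.1]
    have h2 := hg s ⟨hs0, by linarith [hs.2]⟩
    have h3 : c / α ≤ c / s := div_le_div_of_nonneg_left hc.le hs0 hs.2
    have h4 : c / (2 * α) * (2 * (s - α)) = c / α * (s - α) := by field_simp
    rw [h4]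
    nlinarith [hs.2]

lemma aux_right {F g : ℝ → ℝ} {α c : ℝ} (hα : α ∈ Ioo (0:ℝ) (1/2)) (hc : 0 < c)
    (hF : ∀ x ∈ Ioo (0:ℝ) 1, HasDerivAt F ((x - α) * g x) x) (hF0 : F α = 0)
    (hg : ∀ x ∈ Ioo (0:ℝ) 1, c / x ≤ g x) {x : ℝ} (hx0 : α ≤ x) (hx : x < 1) :
    0 ≤ F x := by
  obtain ⟨h0, h1⟩ := hα
  rw [← hF0]
  refine aux_mono (f' := fun s => (s - α) * g s) hx0 ?_ ?_
  · exact fun s hs => hF s ⟨by linarith [hs.1], by linarith [hs.2]⟩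
  · intro s hs
    have hs0 : 0 < s := by linarith [hs.1]
    have h2 := hg s ⟨hs0, by linarith [hs.2]⟩
    have : 0 < c / s := by positivity
    exact mul_nonneg (by linarith [hs.1]) (by linarith)

lemma aux_right2 {F g : ℝ → ℝ} {α c : ℝ} (hα : α ∈ Ioo (0:ℝ) (1/2)) (hc : 0 < c)
    (hF : ∀ x ∈ Ioo (0:ℝ) 1, HasDerivAt F ((x - α) * g x) x) (hF0 : F α = 0)
    (hg : ∀ x ∈ Ioo (0:ℝ) 1, c / x ≤ g x) {x : ℝ} (hx0 : 2 * α ≤ x) (hx : x < 1) :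
    c / 3 * (x - 2 * α) + c * α / 6 ≤ F x := by
  have hp := aux_right hα hc hF hF0 hg (x := 3 / 2 * α) (by linarith [hα.1]) (by linarith [hα.2])
  obtain ⟨h0, h1⟩ := hα
  have := aux_mono (f := fun s => F s - c / 3 * s)
    (f' := fun s => (s - α) * g s - c / 3 * 1) (a := 3 / 2 * α) (b := x) (by linarith) ?_ ?_
  · nlinarith
  · intro s hs
    exact (hF s ⟨by linarith [hs.1], by linarith [hs.2]⟩).sub ((hasDerivAt_id s).const_mul (c / 3))
  · intro s hs
    have hs0 : 0 < s := by linarith [hs.1]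
    have h2 := hg s ⟨hs0, by linarith [hs.2]⟩
    have h3 : (s - α) * (c / s) ≤ (s - α) * g s := mul_le_mul_of_nonneg_left h2 (by linarith [hs.1])
    have h4 : c / 3 ≤ (s - α) * (c / s) := by
      rw [← mul_div_assoc, le_div_iff₀ hs0]
      nlinarith [hs.1]
    linarith

lemma aux_upper {F g : ℝ → ℝ} {α K : ℝ} (hα : α ∈ Ioo (0:ℝ) (1/2)) (hK : 0 < K)
    (hF : ∀ x ∈ Ioo (0:ℝ) 1, HasDerivAt F ((x - α) * g x) x) (hF0 : F α = 0)
    (hg : ∀ x ∈ Ioo (0:ℝ) 1, g x ≤ K / (x * (1 - x))) {x : ℝ} (hx0 : α / 2 ≤ x) (hx : x ≤ α) :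
    F x ≤ 2 * K / α * (x - α) ^ 2 := by
  obtain ⟨h0, h1⟩ := hα
  have := aux_mono (f := fun s => F s - 2 * K / α * (s - α) ^ 2)
    (f' := fun s => (s - α) * g s - 2 * K / α * (2 * (s - α))) hx ?_ ?_
  · simp only [hF0, sub_self] at this
    norm_num at this
    linarith
  · intro s hs
    have h2 := (hF s ⟨by linarith [hs.1], by linarith [hs.2]⟩).sub
      ((((hasDerivAt_id s).sub_const α).pow 2).const_mul (2 * K / α))
    exact HasDerivAt.congr_deriv h2 (by simp)
  · intro s hs
    have hs0 : α / 2 ≤ s := by linarith [hs.1]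
    have h2 := hg s ⟨by linarith, by linarith [hs.2]⟩
    have h3 : K / (s * (1 - s)) ≤ K / (α / 4) := by
      apply div_le_div_of_nonneg_left hK.le (by linarith)
      nlinarith [hs.2]
    have h4 : 2 * K / α * (2 * (s - α)) = K / (α / 4) * (s - α) := by field_simp; ring
    rw [h4]
    nlinarith [hs.2]

set_option maxHeartbeats 2000000 in
lemma aux_main {F g : ℝ → ℝ} {α c K : ℝ} (N : ℕ) (hN : 1 ≤ N)
    (hα : α ∈ Ioo (0:ℝ) (1/2)) (hc : 0 < c) (hK : 0 < K)
    (hF : ∀ x ∈ Ioo (0:ℝ) 1, HasDerivAt F ((x - α) * g x) x) (hF0 : F α = 0)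
    (hg : ∀ x ∈ Ioo (0:ℝ) 1, c / x ≤ g x)
    (hg' : ∀ x ∈ Ioo (0:ℝ) 1, g x ≤ K / (x * (1 - x))) :
    |1 - (∫ x in (α/2)..(2*α), Real.exp (-(N:ℝ) * F x)) / ∫ x in (0:ℝ)..1, Real.exp (-(N:ℝ) * F x)|
      ≤ ((1 / 2 + 3 / c) * 2 * Real.exp (K / 2) * (512 / c ^ 2) + Real.exp (c / 16))
        * Real.exp (-(c / 16) * ((N:ℝ) * α)) / ((N:ℝ) * α) := by
  have hα' := hα
  obtain ⟨h0, h1⟩ := hα'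
  have hN' : (1:ℝ) ≤ N := by exact_mod_cast hN
  have hN0 : (0:ℝ) < N := by linarith
  set E : ℝ → ℝ := fun x => Real.exp (-(N:ℝ) * F x) with hE
  have hFn : ∀ x ∈ Ioo (0:ℝ) 1, 0 ≤ F x := by
    intro x hx
    rcases le_total x α with h | h
    · exact le_trans (by positivity) (aux_left hα hc hF hF0 hg hx.1 h)
    · exact aux_right hα hc hF hF0 hg h hx.2
  have hEpos : ∀ x, 0 < E x := fun x => Real.exp_pos _
  have hcont : ContinuousOn E (Ioo 0 1) := by
    intro x hx
    have := (hF x hx).continuousAt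
    exact (Real.continuous_exp.continuousAt.comp (continuousAt_const.mul this)).continuousWithinAt
  have hintOn : MeasureTheory.IntegrableOn E (Ioo 0 1) := by
    apply MeasureTheory.IntegrableOn.of_bound (by simp)
      (hcont.aestronglyMeasurable measurableSet_Ioo) 1
    refine (MeasureTheory.ae_restrict_iff' measurableSet_Ioo).2 (Eventually.of_forall fun x hx => ?_)
    rw [Real.norm_of_nonneg (hEpos x).le]
    apply Real.exp_le_one_iff.2
    nlinarith [hFn x hx]
  have hint01 : IntervalIntegrable E MeasureTheory.volume 0 1 := by
    rw [intervalIntegrable_iff_integrableOn_Ioo_of_le zero_le_one]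
    exact hintOn
  have hint : ∀ a b, 0 ≤ a → a ≤ b → b ≤ 1 → IntervalIntegrable E MeasureTheory.volume a b := by
    intro a b ha hab hb
    apply hint01.mono_set
    rw [uIcc_of_le hab, uIcc_of_le zero_le_one]
    exact Icc_subset_Icc ha hb
  have i1 := hint 0 (α/2) le_rfl (by linarith) (by linarith)
  have i2 := hint (α/2) (2*α) (by linarith) (by linarith) (by linarith)
  have i3 := hint (2*α) 1 (by linarith) (by linarith) (by linarith)
  have hsum := intervalIntegral.integral_add_adjacent_intervals (i1.trans i2) i3
  rw [← intervalIntegral.integral_add_adjacent_intervals i1 i2] at hsum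
  set A := ∫ x in (0:ℝ)..(α/2), E x with hA
  set B := ∫ x in (α/2)..(2*α), E x with hB
  set D := ∫ x in (2*α)..1, E x with hD
  set Q := ∫ x in (0:ℝ)..1, E x with hQ
  have hA0 : 0 ≤ A := intervalIntegral.integral_nonneg (by linarith) fun x _ => (hEpos x).le
  have hD0 : 0 ≤ D := intervalIntegral.integral_nonneg (by linarith) fun x _ => (hEpos x).le
  have hB0 : 0 < B := intervalIntegral.intervalIntegral_pos_of_pos i2 hEpos (by linarith)
  have hQ0 : 0 < Q := by linarith
  have hrat : 1 - B / Q = (A + D) / Q := by field_simp; linarith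
  rw [hrat, abs_of_nonneg (by positivity)]
  obtain ⟨M, hM⟩ : ∃ M, M = (N:ℝ) * α := ⟨_, rfl⟩
  have hM0 : 0 < M := by rw [hM]; positivity
  rw [← hM]
  rw [le_div_iff₀ hM0]
  have hex := Real.exp_pos (-(c / 16) * M)
  rcases le_total M 1 with hM1 | hM1
  · have r1 : (A + D) / Q ≤ 1 := by rw [div_le_one hQ0]; linarith
    have r2 : 1 ≤ Real.exp (c / 16) * Real.exp (-(c / 16) * M) := by
      rw [← Real.exp_add]
      apply Real.one_le_exp
      nlinarith
    have r3 : 0 ≤ (1 / 2 + 3 / c) * 2 * Real.exp (K / 2) * (512 / c ^ 2) := by positivity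
    have r4 : (A + D) / Q * M ≤ 1 := by
      have : 0 ≤ (A + D) / Q := by positivity
      nlinarith
    nlinarith
  -- large M
  have bA : A ≤ α / 2 * Real.exp (-(c * M / 8)) := by
    have : A ≤ ∫ x in (0:ℝ)..(α/2), Real.exp (-(c * M / 8)) := by
      apply intervalIntegral.integral_mono_on_of_le_Ioo (by linarith) i1
        intervalIntegrable_const
      intro x hx
      apply Real.exp_le_exp.2
      have h3 := aux_left hα hc hF hF0 hg hx.1 (by linarith [hx.2])
      have h4 : c * α / 8 ≤ c / (2 * α) * (x - α) ^ 2 := by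
        rw [div_mul_eq_mul_div, le_div_iff₀ (by positivity)]
        have : (α / 2) ^ 2 ≤ (x - α) ^ 2 := by nlinarith [hx.2, hx.1]
        nlinarith
      rw [hM]
      nlinarith
    simpa using this
  have bD : D ≤ 3 * α / c * Real.exp (-(c * M / 8)) := by
    have hk : 0 < c / 3 * N := by positivity
    have s1 : D ≤ ∫ x in (2*α)..1, Real.exp (-(c * M / 8)) * Real.exp (-(c / 3 * N * (x - 2 * α))) := by
      apply intervalIntegral.integral_mono_on_of_le_Ioo (by linarith) i3
        (Continuous.intervalIntegrable (by fun_prop) _ _)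
      intro x hx
      rw [← Real.exp_add]
      apply Real.exp_le_exp.2
      have h3 := aux_right2 hα hc hF hF0 hg hx.1.le hx.2
      have h5 := mul_le_mul_of_nonneg_left h3 hN0.le
      rw [hM]
      have : 0 < c * N * α := by positivity
      nlinarith
    have s2 : ∫ x in (2*α)..1, Real.exp (-(c / 3 * N * (x - 2 * α)))
        = -(Real.exp (-(c / 3 * N * (1 - 2 * α))) / (c / 3 * N)) -
          -(Real.exp (-(c / 3 * N * (2 * α - 2 * α))) / (c / 3 * N)) := by
      apply intervalIntegral.integral_eq_sub_of_hasDerivAt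
        (f := fun x => -(Real.exp (-(c / 3 * N * (x - 2 * α))) / (c / 3 * N)))
      · intro x _
        have := ((((((hasDerivAt_id x).sub_const (2 * α)).const_mul (c / 3 * N)).neg).exp).div_const
          (c / 3 * N)).neg
        refine HasDerivAt.congr_deriv this ?_
        simp only [id, Pi.neg_apply]
        field_simp
      · exact Continuous.intervalIntegrable (by fun_prop) _ _
    have s3 : ∫ x in (2*α)..1, Real.exp (-(c / 3 * N * (x - 2 * α))) ≤ 3 * α / c := by
      rw [s2]
      simp only [sub_self, mul_zero, neg_zero, Real.exp_zero]
      have p1 : 0 ≤ Real.exp (-(c / 3 * N * (1 - 2 * α))) / (c / 3 * N) := by positivity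
      have p2 : 1 / (c / 3 * N) ≤ 3 * α / c := by
        rw [div_le_div_iff₀ hk hc]
        rw [hM] at hM1
        nlinarith
      linarith
    rw [intervalIntegral.integral_const_mul] at s1
    have := mul_le_mul_of_nonneg_left s3 (Real.exp_pos (-(c * M / 8))).le
    linarith
  have bB : α / (2 * M) * Real.exp (-(K / 2)) ≤ B := by
    have hm : α / (2 * M) ≤ α / 2 := div_le_div_of_nonneg_left h0.le (by norm_num) (by linarith)
    have hm0 : 0 < α / (2 * M) := by positivity
    have s0 : ∫ x in (α - α / (2 * M))..α, E x ≤ B := by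
      apply intervalIntegral.integral_mono_interval (by linarith) (by linarith) (by linarith) _ i2
      exact Eventually.of_forall fun x => (hEpos x).le
    have s1 : ∫ x in (α - α / (2 * M))..α, Real.exp (-(K / 2)) ≤ ∫ x in (α - α / (2 * M))..α, E x := by
      apply intervalIntegral.integral_mono_on_of_le_Ioo (by linarith) intervalIntegrable_const
        (hint _ _ (by linarith) (by linarith) (by linarith))
      intro x hx
      apply Real.exp_le_exp.2
      have h3 := aux_upper hα hK hF hF0 hg' (x := x) (by linarith [hx.1]) hx.2.le
      have h4 : (x - α) ^ 2 ≤ (α / (2 * M)) ^ 2 := by nlinarith [hx.1, hx.2]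
      have h5 : N * (2 * K / α * (α / (2 * M)) ^ 2) ≤ K / 2 := by
        have : N * (2 * K / α * (α / (2 * M)) ^ 2) = K / 2 * (1 / M) := by
          rw [hM]; field_simp
        rw [this]
        have : 1 / M ≤ 1 := by rw [div_le_one hM0]; exact hM1
        nlinarith
      have h6 : N * (2 * K / α * (x - α) ^ 2) ≤ N * (2 * K / α * (α / (2 * M)) ^ 2) := by gcongr
      have h7 : N * F x ≤ N * (2 * K / α * (x - α) ^ 2) := by gcongr
      linarith
    simp at s1
    have e : α * (M⁻¹ * 2⁻¹) = α / (2 * M) := by field_simp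
    first
      | linarith
      | (rw [e] at s1; linarith)
  have q1 : (A + D) / Q ≤ (A + D) / (α / (2 * M) * Real.exp (-(K / 2))) := by
    apply div_le_div_of_nonneg_left (by positivity) (by positivity)
    linarith
  have q2 : (A + D) / (α / (2 * M) * Real.exp (-(K / 2))) ≤
      (1 / 2 + 3 / c) * 2 * Real.exp (K / 2) * M * Real.exp (-(c * M / 8)) := by
    rw [div_le_iff₀ (by positivity)]
    have : (1 / 2 + 3 / c) * 2 * Real.exp (K / 2) * M * Real.exp (-(c * M / 8)) *
        (α / (2 * M) * Real.exp (-(K / 2))) = (α / 2 + 3 * α / c) * Real.exp (-(c * M / 8)) := by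
      rw [Real.exp_neg (K / 2)]
      field_simp
    rw [this]
    linarith
  have q3 : M * M * Real.exp (-(c * M / 8)) ≤ 512 / c ^ 2 * Real.exp (-(c / 16) * M) := by
    have e1 : Real.exp (-(c * M / 8)) = Real.exp (-(c / 16 * M)) * Real.exp (-(c / 16) * M) := by
      rw [← Real.exp_add]; congr 1; ring
    rw [e1, ← mul_assoc]
    apply mul_le_mul_of_nonneg_right _ hex.le
    rw [Real.exp_neg, ← div_eq_mul_inv, div_le_div_iff₀ (Real.exp_pos _) (by positivity)]
    have := Real.quadratic_le_exp_of_nonneg (x := c / 16 * M) (by positivity)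
    have : 0 < c * M := by positivity
    nlinarith
  calc (A + D) / Q * M ≤ (1 / 2 + 3 / c) * 2 * Real.exp (K / 2) * M * Real.exp (-(c * M / 8)) * M :=
        mul_le_mul_of_nonneg_right (q1.trans q2) hM0.le
    _ = (1 / 2 + 3 / c) * 2 * Real.exp (K / 2) * (M * M * Real.exp (-(c * M / 8))) := by ring
    _ ≤ (1 / 2 + 3 / c) * 2 * Real.exp (K / 2) * (512 / c ^ 2 * Real.exp (-(c / 16) * M)) := by
        gcongr
    _ ≤ _ := by
        have : 0 < Real.exp (c / 16) * Real.exp (-(c / 16) * M) := by positivity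
        rw [add_mul]
        linarith

lemma aux_deriv1 (f0 f1 : ℝ → ℝ) (hf0 : ContDiff ℝ (⊤ : ℕ∞) f0) (hf1 : ContDiff ℝ (⊤ : ℕ∞) f1)
    (t x : ℝ) (hx : x ∈ Ioo (0:ℝ) 1) :
    HasDerivAt (Gt f0 f1 t) (Real.log x - Real.log (1 - x) + ((1 - t) * deriv f0 x + t * deriv f1 x)) x := by
  have hx1 : x ≠ 0 := hx.1.ne'
  have hx2 : 1 - x ≠ 0 := by linarith [hx.2]
  have d0 : HasDerivAt f0 (deriv f0 x) x := (hf0.differentiable (by simp) x).hasDerivAt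
  have d1 : HasDerivAt f1 (deriv f1 x) x := (hf1.differentiable (by simp) x).hasDerivAt
  have a := (hasDerivAt_id x).mul (Real.hasDerivAt_log hx1)
  have b0 : HasDerivAt (fun x : ℝ => 1 - x) (-1) x := by
    simpa using (hasDerivAt_id x).const_sub 1
  have b := b0.mul (b0.log hx2)
  have := (a.add b).add ((d0.const_mul (1 - t)).add (d1.const_mul t))
  refine HasDerivAt.congr_deriv this ?_
  simp only [id]
  field_simp
  ring

lemma aux_deriv2 (f0 f1 : ℝ → ℝ) (hf0 : ContDiff ℝ (⊤ : ℕ∞) f0) (hf1 : ContDiff ℝ (⊤ : ℕ∞) f1)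
    (t x : ℝ) (hx : x ∈ Ioo (0:ℝ) 1) :
    HasDerivAt (deriv (Gt f0 f1 t))
      (1 / (x * (1 - x)) + ((1 - t) * deriv (deriv f0) x + t * deriv (deriv f1) x)) x := by
  have hx1 : x ≠ 0 := hx.1.ne'
  have hx2 : 1 - x ≠ 0 := by linarith [hx.2]
  have c0 : Differentiable ℝ (deriv f0) :=
    (contDiff_infty_iff_deriv.1 hf0).2.differentiable (by simp)
  have c1 : Differentiable ℝ (deriv f1) :=
    (contDiff_infty_iff_deriv.1 hf1).2.differentiable (by simp)
  have d0 := (c0 x).hasDerivAt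
  have d1 := (c1 x).hasDerivAt
  have b0 : HasDerivAt (fun x : ℝ => 1 - x) (-1) x := by
    simpa using (hasDerivAt_id x).const_sub 1
  have := ((Real.hasDerivAt_log hx1).sub (b0.log hx2)).add
    ((d0.const_mul (1 - t)).add (d1.const_mul t))
  have h2 : HasDerivAt (fun x => Real.log x - Real.log (1 - x) +
      ((1 - t) * deriv f0 x + t * deriv f1 x))
      (1 / (x * (1 - x)) + ((1 - t) * deriv (deriv f0) x + t * deriv (deriv f1) x)) x := by
    refine HasDerivAt.congr_deriv this ?_
    field_simp
    ring
  apply h2.congr_of_eventuallyEq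
  filter_upwards [isOpen_Ioo.mem_nhds hx] with y hy
  exact (aux_deriv1 f0 f1 hf0 hf1 t y hy).deriv

lemma aux_bound (f : ℝ → ℝ) (hf : ContDiff ℝ (⊤ : ℕ∞) f)
    (h : ∀ x ∈ Ioo (0:ℝ) 1, 0 < 1 / (x * (1 - x)) + deriv (deriv f) x) :
    ∃ c K : ℝ, 0 < c ∧ 0 < K ∧ ∀ x ∈ Icc (0:ℝ) 1,
      c ≤ 1 + x * (1 - x) * deriv (deriv f) x ∧ 1 + x * (1 - x) * deriv (deriv f) x ≤ K := by
  have hc : Continuous (deriv (deriv f)) :=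
    ((contDiff_infty_iff_deriv.1 ((contDiff_infty_iff_deriv.1 hf).2)).2).continuous
  have hcont : Continuous fun x => 1 + x * (1 - x) * deriv (deriv f) x := by fun_prop
  have hpos : ∀ x ∈ Icc (0:ℝ) 1, 0 < 1 + x * (1 - x) * deriv (deriv f) x := by
    intro x hx
    rcases eq_or_lt_of_le hx.1 with h0 | h0
    · simp [← h0]
    rcases eq_or_lt_of_le hx.2 with h1 | h1
    · simp [h1]
    have hp : 0 < x * (1 - x) := mul_pos h0 (by linarith)
    have := mul_pos hp (h x ⟨h0, h1⟩)
    rw [mul_add, mul_one_div_cancel hp.ne'] at this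
    exact this
  obtain ⟨a, ha, ha'⟩ := isCompact_Icc.exists_isMinOn (nonempty_Icc.2 (zero_le_one (α := ℝ)))
    hcont.continuousOn
  obtain ⟨b, hb, hb'⟩ := isCompact_Icc.exists_isMaxOn (nonempty_Icc.2 (zero_le_one (α := ℝ)))
    hcont.continuousOn
  exact ⟨_, _, hpos a ha, hpos b hb, fun x hx => ⟨ha' hx, hb' hx⟩⟩

theorem bergman_cp1_localization_of_norming_integral
    (f0 f1 : ℝ → ℝ) (hf0 : ContDiff ℝ (⊤ : ℕ∞) f0) (hf1 : ContDiff ℝ (⊤ : ℕ∞) f1)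
    (hG0 : ∀ x ∈ Set.Ioo (0:ℝ) 1, 0 < iteratedDeriv 2 (Gt f0 f1 0) x)
    (hG1 : ∀ x ∈ Set.Ioo (0:ℝ) 1, 0 < iteratedDeriv 2 (Gt f0 f1 1) x) :
    ∃ δ : ℝ, 0 < δ ∧ ∃ C : ℝ, 0 < C ∧
      ∀ N : ℕ, 1 ≤ N → ∀ t ∈ Set.Icc (0:ℝ) 1, ∀ α ∈ Set.Ioo (0:ℝ) (1/2),
        |1 - (2 * Real.pi * α *
            ∫ y in (-(1:ℝ)/2)..1, Real.exp (-((N:ℝ) * α) * RPhase (Gt f0 f1 t) α y)) /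
          Qnorm (Gt f0 f1 t) N α|
        ≤ C * Real.exp (-δ * ((N:ℝ) * α)) / ((N:ℝ) * α) := by
  obtain ⟨c0, K0, hc0, hK0, hb0⟩ := aux_bound f0 hf0 (fun x hx => by
    have := hG0 x hx
    rw [iteratedDeriv_succ, iteratedDeriv_one, (aux_deriv2 f0 f1 hf0 hf1 0 x hx).deriv] at this
    simpa using this)
  obtain ⟨c1, K1, hc1, hK1, hb1⟩ := aux_bound f1 hf1 (fun x hx => by
    have := hG1 x hx
    rw [iteratedDeriv_succ, iteratedDeriv_one, (aux_deriv2 f0 f1 hf0 hf1 1 x hx).deriv] at this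
    simpa using this)
  obtain ⟨c, hc, hcc0, hcc1⟩ : ∃ c, 0 < c ∧ c ≤ c0 ∧ c ≤ c1 :=
    ⟨min c0 c1, lt_min hc0 hc1, min_le_left _ _, min_le_right _ _⟩
  obtain ⟨K, hK, hKK0, hKK1⟩ : ∃ K, 0 < K ∧ K0 ≤ K ∧ K1 ≤ K :=
    ⟨max K0 K1, lt_max_of_lt_left hK0, le_max_left _ _, le_max_right _ _⟩
  refine ⟨c / 16, by positivity,
    (1 / 2 + 3 / c) * 2 * Real.exp (K / 2) * (512 / c ^ 2) + Real.exp (c / 16), by positivity, ?_⟩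
  intro N hN t ht α hα
  have hα0 : α ≠ 0 := hα.1.ne'
  have hαI : α ∈ Ioo (0:ℝ) 1 := ⟨hα.1, by linarith [hα.2]⟩
  set G := Gt f0 f1 t with hG
  set g : ℝ → ℝ := fun x =>
    1 / (x * (1 - x)) + ((1 - t) * deriv (deriv f0) x + t * deriv (deriv f1) x) with hg
  have hgx : ∀ x ∈ Ioo (0:ℝ) 1, c ≤ x * (1 - x) * g x ∧ x * (1 - x) * g x ≤ K := by
    intro x hx
    have hp : 0 < x * (1 - x) := mul_pos hx.1 (by linarith [hx.2])
    have e : x * (1 - x) * g x = (1 - t) * (1 + x * (1 - x) * deriv (deriv f0) x)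
        + t * (1 + x * (1 - x) * deriv (deriv f1) x) := by
      simp only [hg]
      rw [mul_add, mul_one_div_cancel hp.ne']
      ring
    obtain ⟨u1, u2⟩ := hb0 x ⟨hx.1.le, hx.2.le⟩
    obtain ⟨v1, v2⟩ := hb1 x ⟨hx.1.le, hx.2.le⟩
    rw [e]
    have t0 := ht.1
    have t1 : 0 ≤ 1 - t := by linarith [ht.2]
    constructor
    · nlinarith [mul_le_mul_of_nonneg_left (hcc0.trans u1) t1,
        mul_le_mul_of_nonneg_left (hcc1.trans v1) t0]
    · nlinarith [mul_le_mul_of_nonneg_left (u2.trans hKK0) t1,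
        mul_le_mul_of_nonneg_left (v2.trans hKK1) t0]
  have key := aux_main (F := Phase G α) (g := g) N hN hα hc hK ?_ ?_ ?_ ?_
  · have hI : 2 * Real.pi * α *
        (∫ y in (-(1:ℝ)/2)..1, Real.exp (-((N:ℝ) * α) * RPhase G α y)) =
        2 * Real.pi * ∫ x in (α/2)..(2*α), Real.exp (-(N:ℝ) * Phase G α x) := by
      have := intervalIntegral.mul_integral_comp_mul_add
        (f := fun x => Real.exp (-(N:ℝ) * Phase G α x)) (a := -(1:ℝ)/2) (b := 1) α α
      rw [show α * (-1 / 2) + α = α / 2 by ring, show α * 1 + α = 2 * α by ring] at this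
      rw [← this, mul_assoc (2 * Real.pi)]
      congr 3
      funext y
      congr 1
      simp only [RPhase]
      rw [show α * (1 + y) = α * y + α by ring]
      field_simp
    rw [hI, Qnorm, mul_div_mul_left _ _ (by positivity)]
    exact key
  · intro x hx
    have := (((hasDerivAt_id x).sub_const α).mul (aux_deriv2 f0 f1 hf0 hf1 t x hx)).sub
      ((aux_deriv1 f0 f1 hf0 hf1 t x hx).sub_const (G α))
    refine HasDerivAt.congr_deriv this ?_
    rw [(aux_deriv1 f0 f1 hf0 hf1 t x hx).deriv]
    simp only [id, hg]
    ring
  · simp [Phase]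
  · intro x hx
    have h2 : 0 < 1 - x := by linarith [hx.2]
    obtain ⟨u, _⟩ := hgx x hx
    rw [div_le_iff₀ hx.1]
    have hgp : 0 < x * g x := by
      by_contra hn
      push Not at hn
      nlinarith
    nlinarith [hx.1]
  · intro x hx
    have hp : 0 < x * (1 - x) := mul_pos hx.1 (by linarith [hx.2])
    rw [le_div_iff₀ hp]
    linarith [(hgx x hx).2]
end

section
/- There exists a constant C > 0 such that for all integers N ≥ 1, all t ∈ [0,1], and all α with N^{−3/4} ≤ α ≤ 2/3: |Q_t^N(α) − (2π)^{3/2}·(N·G_t''(α))^{−1/2}| ≤ C·(N·G_t''(α))^{−1/2}·(N·α)^{−1}; i.e., in the interior region the norming constant has the uniform Laplace asymptotics Q_t^N(α) = (2π)^{3/2}·(N·G_t''(α))^{−1/2}·(1 + O(1/(Nα))). -/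
open Set Filter

lemma aux_exp_two (A B M : ℝ) (hA : M ≤ A) (hB : M ≤ B) :
    |Real.exp (-A) - Real.exp (-B) * (1 + (B - A))| ≤ (A - B) ^ 2 * Real.exp (-M) := by
  have hAB : Real.exp (-A) = Real.exp (-B) * Real.exp (B - A) := by
    rw [← Real.exp_add]; congr 1; ring
  have h1 := Real.add_one_le_exp (B - A)
  have h2 := Real.add_one_le_exp (A - B)
  have hBA : Real.exp (-B) = Real.exp (-A) * Real.exp (A - B) := by
    rw [← Real.exp_add]; congr 1; ring
  have eA := Real.exp_pos (-A)
  have eB := Real.exp_pos (-B)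
  have lA : Real.exp (-A) ≤ Real.exp (-M) := Real.exp_le_exp.2 (by linarith)
  have lB : Real.exp (-B) ≤ Real.exp (-M) := Real.exp_le_exp.2 (by linarith)
  have i1 : Real.exp (-B) * (1 + (B - A)) ≤ Real.exp (-A) := by
    rw [hAB]; exact mul_le_mul_of_nonneg_left (by linarith) eB.le
  have i2 : Real.exp (-A) * (1 + (A - B)) ≤ Real.exp (-B) := by
    rw [hBA]; exact mul_le_mul_of_nonneg_left (by linarith) eA.le
  rw [abs_of_nonneg (by linarith)]
  have hsq := sq_nonneg (A - B)
  have i3 : (A - B) ^ 2 * Real.exp (-A) ≤ (A - B) ^ 2 * Real.exp (-M) := by gcongr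
  have i4 : (A - B) ^ 2 * Real.exp (-B) ≤ (A - B) ^ 2 * Real.exp (-M) := by gcongr
  rcases le_total A B with h | h
  · nlinarith [mul_le_mul_of_nonneg_left i2 (sub_nonneg.2 h)]
  · nlinarith [mul_le_mul_of_nonneg_left i1 (sub_nonneg.2 h)]

lemma aux_absexp (v : ℝ) (hv : 0 < v) :
    MeasureTheory.Integrable (fun y : ℝ => Real.exp (-v * |y|)) ∧
      ∫ y : ℝ, Real.exp (-v * |y|) = 2 / v := by
  have h : ∫ y : ℝ, Real.exp (-v * |y|) = 2 / v := by
    rw [integral_comp_abs (f := fun y => Real.exp (-v * y)),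
      integral_exp_mul_Ioi (by linarith)]
    simp
    field_simp
  refine ⟨?_, h⟩
  by_contra hc
  rw [MeasureTheory.integral_undef hc] at h
  have : 0 < 2 / v := by positivity
  linarith

lemma aux_gauss3 (a l b : ℝ) (ha : 0 < a) (hl : 0 < l) :
    MeasureTheory.Integrable
      (fun y : ℝ => Real.exp (-(l * (a / 2 * y ^ 2))) * (1 - l * (b * y ^ 3))) ∧
      ∫ y : ℝ, Real.exp (-(l * (a / 2 * y ^ 2))) * (1 - l * (b * y ^ 3)) =
        Real.sqrt (2 * Real.pi / (l * a)) := by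
  have hc : 0 < l * a / 2 := by positivity
  have I1 := integrable_exp_neg_mul_sq hc
  have I3 : MeasureTheory.Integrable (fun y : ℝ => y ^ 3 * Real.exp (-(l * a / 2) * y ^ 2)) := by
    have := integrable_rpow_mul_exp_neg_mul_sq hc (s := 3) (by norm_num)
    refine this.congr (Eventually.of_forall fun x => ?_)
    simp only
    rw [← Real.rpow_natCast x 3]; norm_num
  have Z : ∫ y : ℝ, y ^ 3 * Real.exp (-(l * a / 2) * y ^ 2) = 0 := by
    have := MeasureTheory.integral_neg_eq_self
      (fun y : ℝ => y ^ 3 * Real.exp (-(l * a / 2) * y ^ 2)) MeasureTheory.volume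
    have h2 : (fun y : ℝ => (-y) ^ 3 * Real.exp (-(l * a / 2) * (-y) ^ 2)) =
        fun y => - (y ^ 3 * Real.exp (-(l * a / 2) * y ^ 2)) := by
      funext y; rw [neg_sq]; ring
    rw [h2, MeasureTheory.integral_neg] at this
    linarith
  have E : (fun y : ℝ => Real.exp (-(l * (a / 2 * y ^ 2))) * (1 - l * (b * y ^ 3))) =
      fun y => Real.exp (-(l * a / 2) * y ^ 2)
        - (l * b) * (y ^ 3 * Real.exp (-(l * a / 2) * y ^ 2)) := by
    funext y
    have : -(l * (a / 2 * y ^ 2)) = -(l * a / 2) * y ^ 2 := by ring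
    rw [this]; ring
  rw [E]
  refine ⟨I1.sub (I3.const_mul _), ?_⟩
  rw [MeasureTheory.integral_sub I1 (I3.const_mul _), MeasureTheory.integral_const_mul, Z,
    integral_gaussian]
  simp only [mul_zero, sub_zero]
  congr 1
  field_simp

/-- bounds on powers times Gaussian -/
lemma aux_pow (l m y : ℝ) (hl : 0 < l) (hm : 0 < m) :
    l ^ 2 * y ^ 6 * Real.exp (-(l * (m * y ^ 2))) ≤
        48 / m ^ 3 * (l⁻¹ * Real.exp (-(l * m / 2) * y ^ 2)) ∧
    l * y ^ 4 * Real.exp (-(l * (m * y ^ 2))) ≤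
        8 / m ^ 2 * (l⁻¹ * Real.exp (-(l * m / 2) * y ^ 2)) ∧
    y ^ 2 * Real.exp (-(l * (m * y ^ 2))) ≤
        2 / m * (l⁻¹ * Real.exp (-(l * m / 2) * y ^ 2)) := by
  set u := l * m / 2 * y ^ 2 with hu
  have hu0 : 0 ≤ u := by positivity
  have e1 : Real.exp (-(l * (m * y ^ 2))) = Real.exp (-u) * Real.exp (-u) := by
    rw [← Real.exp_add]; congr 1; rw [hu]; ring
  have e2 : Real.exp (-(l * m / 2) * y ^ 2) = Real.exp (-u) := by congr 1; rw [hu]; ring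
  have p := Real.exp_pos (-u)
  have key : ∀ n : ℕ, u ^ n * Real.exp (-u) ≤ n.factorial := by
    intro n
    have := Real.pow_div_factorial_le_exp u hu0 n
    rw [Real.exp_neg, ← div_eq_mul_inv, div_le_iff₀ (Real.exp_pos _)]
    rw [div_le_iff₀ (by positivity)] at this
    linarith
  have k1 := key 1
  have k2 := key 2
  have k3 := key 3
  simp [Nat.factorial] at k1 k2 k3
  rw [e1, e2]
  refine ⟨?_, ?_, ?_⟩
  · have : l ^ 2 * y ^ 6 * (Real.exp (-u) * Real.exp (-u)) =
      8 / m ^ 3 * (l⁻¹ * Real.exp (-u)) * (u ^ 3 * Real.exp (-u)) := by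
      rw [hu]; field_simp; ring
    rw [this]
    calc _ ≤ 8 / m ^ 3 * (l⁻¹ * Real.exp (-u)) * 6 := by
          apply mul_le_mul_of_nonneg_left _ (by positivity); linarith
      _ = _ := by ring
  · have : l * y ^ 4 * (Real.exp (-u) * Real.exp (-u)) =
      4 / m ^ 2 * (l⁻¹ * Real.exp (-u)) * (u ^ 2 * Real.exp (-u)) := by
      rw [hu]; field_simp; ring
    rw [this]
    calc _ ≤ 4 / m ^ 2 * (l⁻¹ * Real.exp (-u)) * 2 := by
          apply mul_le_mul_of_nonneg_left _ (by positivity); linarith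
      _ = _ := by ring
  · have : y ^ 2 * (Real.exp (-u) * Real.exp (-u)) =
      2 / m * (l⁻¹ * Real.exp (-u)) * (u * Real.exp (-u)) := by
      rw [hu]; field_simp
    rw [this]
    calc _ ≤ 2 / m * (l⁻¹ * Real.exp (-u)) * 1 := by
          apply mul_le_mul_of_nonneg_left _ (by positivity); linarith
      _ = _ := by ring

/-- pointwise bound, near -/
lemma aux_near (m K l a b R y : ℝ) (hm : 0 < m) (hK : 0 < K) (hl : 0 < l)
    (ha : m ≤ a / 2) (hb : |b| ≤ K) (hy : |y| ≤ 1 / 4) (hR : m * y ^ 2 ≤ R)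
    (hT : |R - a / 2 * y ^ 2 - b * y ^ 3| ≤ K * y ^ 4) :
    |Real.exp (-(l * R)) - Real.exp (-(l * (a / 2 * y ^ 2))) * (1 - l * (b * y ^ 3))| ≤
      (4 * K ^ 2 * (48 / m ^ 3) + K * (8 / m ^ 2)) *
        (l⁻¹ * Real.exp (-(l * m / 2) * y ^ 2)) := by
  obtain ⟨p1, p2, -⟩ := aux_pow l m y hl hm
  have hM2 : m * y ^ 2 ≤ a / 2 * y ^ 2 := by gcongr
  have h := aux_exp_two (l * R) (l * (a / 2 * y ^ 2)) (l * (m * y ^ 2)) (by gcongr) (by gcongr)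
  have hd : |R - a / 2 * y ^ 2| ≤ 2 * K * |y| ^ 3 := by
    have h1 : |R - a / 2 * y ^ 2| ≤ K * y ^ 4 + |b * y ^ 3| := by
      calc _ = |(R - a / 2 * y ^ 2 - b * y ^ 3) + b * y ^ 3| := by ring_nf
        _ ≤ _ := (abs_add_le _ _).trans (by gcongr)
    have h2 : |b * y ^ 3| ≤ K * |y| ^ 3 := by rw [abs_mul, abs_pow]; gcongr
    have h3 : y ^ 4 ≤ |y| ^ 3 := by
      have : y ^ 4 = |y| ^ 3 * |y| := by
        rw [← pow_succ]; exact (Even.pow_abs (by decide : Even 4) y).symm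
      rw [this]
      have : 0 ≤ |y| ^ 3 := by positivity
      nlinarith
    nlinarith [mul_le_mul_of_nonneg_left h3 hK.le]
  have hd2 : (l * R - l * (a / 2 * y ^ 2)) ^ 2 ≤ 4 * K ^ 2 * (l ^ 2 * y ^ 6) := by
    have : (R - a / 2 * y ^ 2) ^ 2 ≤ (2 * K * |y| ^ 3) ^ 2 := by
      rw [← sq_abs]; gcongr
    have e : (2 * K * |y| ^ 3) ^ 2 = 4 * K ^ 2 * y ^ 6 := by
      rw [mul_pow, ← pow_mul, show 3 * 2 = 2 * 3 by norm_num, pow_mul, sq_abs]; ring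
    rw [e] at this
    calc _ = l ^ 2 * (R - a / 2 * y ^ 2) ^ 2 := by ring
      _ ≤ l ^ 2 * (4 * K ^ 2 * y ^ 6) := by gcongr
      _ = _ := by ring
  set EB := Real.exp (-(l * (a / 2 * y ^ 2))) with hEB
  set EM := Real.exp (-(l * (m * y ^ 2))) with hEM
  have hEBM : EB ≤ EM := Real.exp_le_exp.2 (by nlinarith)
  have hEBpos : 0 < EB := Real.exp_pos _
  have hEMpos : 0 < EM := Real.exp_pos _
  have hsplit : Real.exp (-(l * R)) - EB * (1 - l * (b * y ^ 3)) =
      (Real.exp (-(l * R)) - EB * (1 + (l * (a / 2 * y ^ 2) - l * R)))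
      + (-(l * EB)) * (R - a / 2 * y ^ 2 - b * y ^ 3) := by ring
  rw [hsplit]
  calc _ ≤ (l * R - l * (a / 2 * y ^ 2)) ^ 2 * EM + (l * EM) * (K * y ^ 4) := by
        refine (abs_add_le _ _).trans (add_le_add h ?_)
        rw [abs_mul, abs_neg, abs_of_pos (by positivity)]
        gcongr
    _ ≤ 4 * K ^ 2 * (l ^ 2 * y ^ 6) * EM + (l * EM) * (K * y ^ 4) := by gcongr
    _ = 4 * K ^ 2 * (l ^ 2 * y ^ 6 * EM) + K * (l * y ^ 4 * EM) := by ring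
    _ ≤ 4 * K ^ 2 * (48 / m ^ 3 * (l⁻¹ * Real.exp (-(l * m / 2) * y ^ 2))) +
         K * (8 / m ^ 2 * (l⁻¹ * Real.exp (-(l * m / 2) * y ^ 2))) := by gcongr
    _ = _ := by ring

/-- pointwise bound, far -/
lemma aux_far (m K l a b H y : ℝ) (hm : 0 < m) (hK : 0 < K) (hl : 0 < l)
    (ha : m ≤ a / 2) (hb : |b| ≤ K) (hy : 1 / 4 ≤ |y|) (hH0 : 0 ≤ H)
    (hH : H ≤ Real.exp (-(l * (m * |y|)))) :
    |H - Real.exp (-(l * (a / 2 * y ^ 2))) * (1 - l * (b * y ^ 3))| ≤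
      8 / m * (l⁻¹ * Real.exp (-(l * m / 2) * |y|)) +
      (16 * (2 / m) + 4 * K * (8 / m ^ 2)) *
        (l⁻¹ * Real.exp (-(l * m / 2) * y ^ 2)) := by
  obtain ⟨-, p2, p3⟩ := aux_pow l m y hl hm
  set EB := Real.exp (-(l * (a / 2 * y ^ 2))) with hEB
  set EM := Real.exp (-(l * (m * y ^ 2))) with hEM
  have hM2 : m * y ^ 2 ≤ a / 2 * y ^ 2 := by gcongr
  have hEBM : EB ≤ EM := Real.exp_le_exp.2 (by nlinarith)
  have hEBpos : 0 < EB := Real.exp_pos _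
  have hEMpos : 0 < EM := Real.exp_pos _
  have h1 : H ≤ 8 / m * (l⁻¹ * Real.exp (-(l * m / 2) * |y|)) := by
    refine hH.trans ?_
    set v := l * m / 2 * |y| with hv
    have hv1 : l * m / 8 ≤ v := by rw [hv]; nlinarith [mul_pos hl hm]
    have hlm : 0 < l * m / 8 := by positivity
    have e1 : Real.exp (-(l * (m * |y|))) = Real.exp (-v) * Real.exp (-v) := by
      rw [← Real.exp_add]; congr 1; rw [hv]; ring
    have e2 : Real.exp (-(l * m / 2) * |y|) = Real.exp (-v) := by congr 1; rw [hv]; ring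
    rw [e1, e2]
    have : Real.exp (-v) ≤ 8 / m * l⁻¹ := by
      rw [Real.exp_neg]
      have : l * m / 8 ≤ Real.exp v := by linarith [Real.add_one_le_exp v]
      calc (Real.exp v)⁻¹ ≤ (l * m / 8)⁻¹ := by gcongr
        _ = _ := by field_simp
    calc _ ≤ (8 / m * l⁻¹) * Real.exp (-v) := by gcongr
      _ = _ := by ring
  have hy2 : 1 ≤ 16 * y ^ 2 := by rw [← sq_abs]; nlinarith
  have hy4 : |y| ^ 3 ≤ 4 * y ^ 4 := by
    have : y ^ 4 = |y| ^ 3 * |y| := by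
      rw [← pow_succ]; exact (Even.pow_abs (by decide : Even 4) y).symm
    rw [this]
    have : 0 ≤ |y| ^ 3 := by positivity
    nlinarith
  have h2 : |1 - l * (b * y ^ 3)| ≤ 16 * y ^ 2 + l * (K * (4 * y ^ 4)) := by
    refine (abs_sub _ _).trans ?_
    rw [abs_one, abs_mul, abs_mul, abs_pow, abs_of_pos hl]
    gcongr
  calc _ ≤ |H| + |EB * (1 - l * (b * y ^ 3))| := abs_sub _ _
    _ = H + EB * |1 - l * (b * y ^ 3)| := by rw [abs_of_nonneg hH0, abs_mul, abs_of_pos hEBpos]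
    _ ≤ H + EM * (16 * y ^ 2 + l * (K * (4 * y ^ 4))) := by gcongr
    _ = H + (16 * (y ^ 2 * EM) + 4 * K * (l * y ^ 4 * EM)) := by ring
    _ ≤ 8 / m * (l⁻¹ * Real.exp (-(l * m / 2) * |y|)) +
       (16 * (2 / m * (l⁻¹ * Real.exp (-(l * m / 2) * y ^ 2))) +
        4 * K * (8 / m ^ 2 * (l⁻¹ * Real.exp (-(l * m / 2) * y ^ 2)))) := by gcongr
    _ = _ := by ring

lemma aux_laplace (m K : ℝ) (hm : 0 < m) (hK : 0 < K) :
    ∃ C : ℝ, 0 < C ∧ ∀ (l a b L : ℝ) (R : ℝ → ℝ), 1 ≤ l → 1 / 4 < L → m ≤ a / 2 → |b| ≤ K →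
      ContinuousOn R (Ioo (-1) L) →
      (∀ y, |y| ≤ 1 / 4 → m * y ^ 2 ≤ R y) →
      (∀ y, |y| ≤ 1 / 4 → |R y - a / 2 * y ^ 2 - b * y ^ 3| ≤ K * y ^ 4) →
      (∀ y ∈ Ioo (-1) L, 1 / 4 ≤ |y| → m * |y| ≤ R y) →
      |(∫ y in Ioo (-1) L, Real.exp (-(l * R y))) - Real.sqrt (2 * Real.pi / (l * a))| ≤
        C * (l⁻¹ * (Real.sqrt l)⁻¹) := by
  set C1 := 4 * K ^ 2 * (48 / m ^ 3) + K * (8 / m ^ 2) + (16 * (2 / m) + 4 * K * (8 / m ^ 2))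
    with hC1
  have hC1p : 0 < C1 := by positivity
  refine ⟨C1 * Real.sqrt (2 * Real.pi / m) + 8 / m * (4 / m), by positivity, ?_⟩
  intro l a b L R hl hL ha hb hcont hR1 hR2 hR3
  have hl0 : 0 < l := by linarith
  have ha0 : 0 < a := by linarith
  set h := (Ioo (-1) L).indicator (fun y => Real.exp (-(l * R y))) with hh
  have hmeas : MeasureTheory.AEStronglyMeasurable h := by
    rw [hh, aestronglyMeasurable_indicator_iff measurableSet_Ioo]
    refine ContinuousOn.aestronglyMeasurable ?_ measurableSet_Ioo
    fun_prop
  obtain ⟨I1, E1⟩ := aux_gauss3 a l b ha0 hl0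
  set g := fun y : ℝ => Real.exp (-(l * (a / 2 * y ^ 2))) * (1 - l * (b * y ^ 3)) with hg
  have hlm : 0 < l * m / 2 := by positivity
  obtain ⟨I2, E2⟩ := aux_absexp (l * m / 2) hlm
  have I3 := integrable_exp_neg_mul_sq hlm
  have E3 := integral_gaussian (l * m / 2)
  set M := fun y : ℝ => C1 * l⁻¹ * Real.exp (-(l * m / 2) * y ^ 2) +
      8 / m * l⁻¹ * Real.exp (-(l * m / 2) * |y|) with hM
  have IM : MeasureTheory.Integrable M := (I3.const_mul _).add (I2.const_mul _)
  have hle : ∀ y, |h y - g y| ≤ M y := by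
    intro y
    have q1 : 0 < l⁻¹ * Real.exp (-(l * m / 2) * y ^ 2) := by positivity
    have q2 : 0 < 8 / m * (l⁻¹ * Real.exp (-(l * m / 2) * |y|)) := by positivity
    have r1 : 0 < 4 * K ^ 2 * (48 / m ^ 3) + K * (8 / m ^ 2) := by positivity
    have r2 : 0 < 16 * (2 / m) + 4 * K * (8 / m ^ 2) := by positivity
    have s1 := mul_pos r1 q1
    have s2 := mul_pos r2 q1
    have hMy : M y = (4 * K ^ 2 * (48 / m ^ 3) + K * (8 / m ^ 2)) *
        (l⁻¹ * Real.exp (-(l * m / 2) * y ^ 2)) + (16 * (2 / m) + 4 * K * (8 / m ^ 2)) *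
        (l⁻¹ * Real.exp (-(l * m / 2) * y ^ 2)) +
        8 / m * (l⁻¹ * Real.exp (-(l * m / 2) * |y|)) := by
      simp only [hM, hC1]; ring
    rcases le_total |y| (1 / 4) with hy | hy
    · have hmem : y ∈ Ioo (-1) L := by
        have := abs_le.1 hy
        constructor <;> linarith
      have hv : h y = Real.exp (-(l * R y)) := by rw [hh, indicator_of_mem hmem]
      rw [hv]
      have := aux_near m K l a b (R y) y hm hK hl0 ha hb hy (hR1 y hy) (hR2 y hy)
      simp only [hg]
      linarith
    · have := aux_far m K l a b (h y) y hm hK hl0 ha hb hy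
        (indicator_nonneg (fun _ _ => (Real.exp_pos _).le) y) (by
          by_cases hmem : y ∈ Ioo (-1) L
          · rw [hh, indicator_of_mem hmem]
            apply Real.exp_le_exp.2
            have := mul_le_mul_of_nonneg_left (hR3 y hmem hy) hl0.le
            linarith
          · rw [hh, indicator_of_notMem hmem]; positivity)
      simp only [hg]
      linarith
  have Id : MeasureTheory.Integrable (fun y => h y - g y) :=
    IM.mono' (hmeas.sub I1.aestronglyMeasurable) (Eventually.of_forall hle)
  have Ih : MeasureTheory.Integrable h := by
    have := Id.add I1
    refine this.congr (Eventually.of_forall fun x => ?_)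
    simp
  have : (∫ y in Ioo (-1) L, Real.exp (-(l * R y))) = ∫ y, h y := by
    rw [hh, MeasureTheory.integral_indicator measurableSet_Ioo]
  rw [this, ← E1, ← MeasureTheory.integral_sub Ih I1]
  have hb1 := MeasureTheory.norm_integral_le_of_norm_le (f := fun y => h y - g y) IM
    (Eventually.of_forall hle)
  rw [Real.norm_eq_abs] at hb1
  refine hb1.trans ?_
  rw [hM, MeasureTheory.integral_add (I3.const_mul _) (I2.const_mul _),
    MeasureTheory.integral_const_mul, MeasureTheory.integral_const_mul, E2, E3]
  have hs : Real.sqrt (Real.pi / (l * m / 2)) = Real.sqrt (2 * Real.pi / m) * (Real.sqrt l)⁻¹ := by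
    rw [← Real.sqrt_inv, ← Real.sqrt_mul (by positivity)]
    congr 1; field_simp
  rw [hs]
  have hsl : l⁻¹ ≤ (Real.sqrt l)⁻¹ := by
    have : Real.sqrt l ≤ l := by
      rw [Real.sqrt_le_left (by linarith)]; nlinarith
    gcongr
    
  calc _ = C1 * Real.sqrt (2 * Real.pi / m) * (l⁻¹ * (Real.sqrt l)⁻¹)
        + 8 / m * (4 / m) * (l⁻¹ * l⁻¹) := by field_simp; ring
    _ ≤ C1 * Real.sqrt (2 * Real.pi / m) * (l⁻¹ * (Real.sqrt l)⁻¹)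
        + 8 / m * (4 / m) * (l⁻¹ * (Real.sqrt l)⁻¹) := by gcongr
    _ = _ := by ring

lemma aux_smooth (f : ℝ → ℝ) (hf : ContDiff ℝ (⊤ : ℕ∞) f) :
    (∀ x, HasDerivAt f (deriv f x) x) ∧ (∀ x, HasDerivAt (deriv f) (deriv (deriv f) x) x) ∧
    Continuous (deriv (deriv f)) ∧
    ∃ K : ℝ, 0 < K ∧ ∀ x ∈ Icc (0:ℝ) 1, |deriv (deriv f) x| ≤ K ∧
      |deriv (deriv (deriv f)) x| ≤ K ∧ ∀ z ∈ Icc (0:ℝ) 1,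
        |deriv (deriv f) z - deriv (deriv f) x - deriv (deriv (deriv f)) x * (z - x)|
          ≤ K * (z - x) ^ 2 := by
  have c1 : ContDiff ℝ (⊤ : ℕ∞) (deriv f) := (contDiff_infty_iff_deriv.1 hf).2
  have c2 : ContDiff ℝ (⊤ : ℕ∞) (deriv (deriv f)) := (contDiff_infty_iff_deriv.1 c1).2
  have c3 : ContDiff ℝ (⊤ : ℕ∞) (deriv (deriv (deriv f))) := (contDiff_infty_iff_deriv.1 c2).2
  have c4 : ContDiff ℝ (⊤ : ℕ∞) (deriv (deriv (deriv (deriv f)))) :=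
    (contDiff_infty_iff_deriv.1 c3).2
  have d0 := (contDiff_infty_iff_deriv.1 hf).1
  have d1 := (contDiff_infty_iff_deriv.1 c1).1
  have d2 := (contDiff_infty_iff_deriv.1 c2).1
  have d3 := (contDiff_infty_iff_deriv.1 c3).1
  refine ⟨fun x => (d0 x).hasDerivAt, fun x => (d1 x).hasDerivAt, c2.continuous, ?_⟩
  obtain ⟨K2, h2⟩ := (isCompact_Icc (a := (0:ℝ)) (b := 1)).exists_bound_of_continuousOn
    c2.continuous.continuousOn
  obtain ⟨K3, h3⟩ := (isCompact_Icc (a := (0:ℝ)) (b := 1)).exists_bound_of_continuousOn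
    c3.continuous.continuousOn
  obtain ⟨K4, h4⟩ := (isCompact_Icc (a := (0:ℝ)) (b := 1)).exists_bound_of_continuousOn
    c4.continuous.continuousOn
  simp only [Real.norm_eq_abs] at h2 h3 h4
  have p2 := (abs_nonneg _).trans (h2 0 (by simp))
  have p3 := (abs_nonneg _).trans (h3 0 (by simp))
  have p4 := (abs_nonneg _).trans (h4 0 (by simp))
  refine ⟨K2 + K3 + K4 + 1, by linarith, fun x hx => ⟨by linarith [h2 x hx], by linarith [h3 x hx],
    fun z hz => ?_⟩⟩
  -- first: Lipschitz bound for the third derivative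
  have lip : ∀ s ∈ Icc (0:ℝ) 1,
      |deriv (deriv (deriv f)) s - deriv (deriv (deriv f)) x| ≤ K4 * |s - x| := by
    intro s hs
    have := Convex.norm_image_sub_le_of_norm_hasDerivWithin_le (s := Icc (0:ℝ) 1) (C := K4)
      (fun w _ => ((d3 w).hasDerivAt).hasDerivWithinAt) (fun w hw => by
        simpa [Real.norm_eq_abs] using h4 w hw) (convex_Icc 0 1) hx hs
    simpa [Real.norm_eq_abs] using this
  have hsub : uIcc x z ⊆ Icc (0:ℝ) 1 := by
    intro s hs
    have := (ordConnected_Icc (a := (0:ℝ)) (b := 1)).uIcc_subset hx hz hs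
    exact this
  have key := Convex.norm_image_sub_le_of_norm_hasDerivWithin_le (s := uIcc x z)
    (f := fun s => deriv (deriv f) s - deriv (deriv (deriv f)) x * s)
    (f' := fun s => deriv (deriv (deriv f)) s - deriv (deriv (deriv f)) x)
    (C := K4 * |z - x|) (x := x) (y := z)
    (fun w _ => by
      have := ((d2 w).hasDerivAt).sub ((hasDerivAt_id w).const_mul (deriv (deriv (deriv f)) x))
      exact (this.congr_deriv (by simp)).hasDerivWithinAt)
    (fun w hw => by
      rw [Real.norm_eq_abs]
      refine (lip w (hsub hw)).trans ?_
      exact mul_le_mul_of_nonneg_left (abs_sub_left_of_mem_uIcc hw) p4)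
    (convex_uIcc x z) left_mem_uIcc right_mem_uIcc
  rw [Real.norm_eq_abs, Real.norm_eq_abs] at key
  have e : K4 * |z - x| * |z - x| = K4 * (z - x) ^ 2 := by rw [← sq_abs]; ring
  rw [e] at key
  have e2 : deriv (deriv f) z - deriv (deriv f) x - deriv (deriv (deriv f)) x * (z - x) =
    deriv (deriv f) z - deriv (deriv (deriv f)) x * z -
      (deriv (deriv f) x - deriv (deriv (deriv f)) x * x) := by ring
  rw [e2]
  refine key.trans ?_
  gcongr
  linarith

lemma aux_min (q : ℝ → ℝ) (hq : Continuous q)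
    (hpos : ∀ x ∈ Ioo (0:ℝ) 1, 0 < 1 / x + 1 / (1 - x) + q x) :
    ∃ c : ℝ, 0 < c ∧ ∀ x ∈ Icc (0:ℝ) 1, c ≤ 1 + x * (1 - x) * q x := by
  obtain ⟨x0, hx0, hmin⟩ := (isCompact_Icc (a := (0:ℝ)) (b := 1)).exists_isMinOn
    ⟨0, by simp⟩ (f := fun x => 1 + x * (1 - x) * q x) (by fun_prop)
  refine ⟨1 + x0 * (1 - x0) * q x0, ?_, fun x hx => hmin hx⟩
  rcases eq_or_lt_of_le hx0.1 with h | h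
  · rw [← h]; simp
  rcases eq_or_lt_of_le hx0.2 with h' | h'
  · rw [h']; simp
  have := hpos x0 ⟨h, h'⟩
  have h1 : 0 < 1 - x0 := by linarith
  have e : 1 + x0 * (1 - x0) * q x0 = x0 * (1 - x0) * (1 / x0 + 1 / (1 - x0) + q x0) := by
    field_simp
    ring
  rw [e]; positivity

lemma aux_Gderiv (f0 f1 : ℝ → ℝ) (t : ℝ)
    (h0 : ∀ x, HasDerivAt f0 (deriv f0 x) x) (h1 : ∀ x, HasDerivAt f1 (deriv f1 x) x)
    (h0' : ∀ x, HasDerivAt (deriv f0) (deriv (deriv f0) x) x)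
    (h1' : ∀ x, HasDerivAt (deriv f1) (deriv (deriv f1) x) x) (x : ℝ) (hx : x ∈ Ioo (0:ℝ) 1) :
    HasDerivAt (Gt f0 f1 t) (deriv (Gt f0 f1 t) x) x ∧
    HasDerivAt (deriv (Gt f0 f1 t))
      (1 / x + 1 / (1 - x) + ((1 - t) * deriv (deriv f0) x + t * deriv (deriv f1) x)) x ∧
    iteratedDeriv 2 (Gt f0 f1 t) x =
      1 / x + 1 / (1 - x) + ((1 - t) * deriv (deriv f0) x + t * deriv (deriv f1) x) := by
  have H : ∀ z ∈ Ioo (0:ℝ) 1, HasDerivAt (Gt f0 f1 t)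
      (Real.log z - Real.log (1 - z) + ((1 - t) * deriv f0 z + t * deriv f1 z)) z := by
    intro z hz
    have z0 : z ≠ 0 := hz.1.ne'
    have z1 : 1 - z ≠ 0 := by linarith [hz.2]
    have a1 := (hasDerivAt_id z).mul (Real.hasDerivAt_log z0)
    have s : HasDerivAt (fun z : ℝ => 1 - z) (-1) z := by
      simpa using (hasDerivAt_id z).const_sub 1
    have a2 := s.mul (s.log z1)
    have a3 := ((h0 z).const_mul (1 - t)).add ((h1 z).const_mul t)
    have := (a1.add a2).add a3
    refine this.congr_deriv ?_
    simp
    field_simp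
    ring
  have ev : deriv (Gt f0 f1 t) =ᶠ[nhds x] fun z =>
      (Real.log z - Real.log (1 - z) + ((1 - t) * deriv f0 z + t * deriv f1 z)) := by
    filter_upwards [isOpen_Ioo.mem_nhds hx] with z hz
    exact (H z hz).deriv
  have x0 : x ≠ 0 := hx.1.ne'
  have x1 : 1 - x ≠ 0 := by linarith [hx.2]
  have s : HasDerivAt (fun z : ℝ => 1 - z) (-1) x := by
    simpa using (hasDerivAt_id x).const_sub 1
  have D : HasDerivAt (deriv (Gt f0 f1 t))
      (1 / x + 1 / (1 - x) + ((1 - t) * deriv (deriv f0) x + t * deriv (deriv f1) x)) x := by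
    refine HasDerivAt.congr_of_eventuallyEq ?_ ev
    have := ((Real.hasDerivAt_log x0).sub (s.log x1)).add
      (((h0' x).const_mul (1 - t)).add ((h1' x).const_mul t))
    refine this.congr_deriv ?_
    simp
    field_simp
    ring
  refine ⟨(H x hx).differentiableAt.hasDerivAt, D, ?_⟩
  rw [iteratedDeriv_succ, iteratedDeriv_one]
  exact D.deriv

/-- the analytic part of the rescaled phase -/
lemma aux_phase (p R : ℝ → ℝ) (p1 c K α : ℝ) (hc : 0 < c) (hK : 0 < K) (hα : 0 < α)
    (hα2 : α ≤ 2 / 3) (hlow : ∀ x ∈ Icc (0:ℝ) 1, c ≤ 1 + x * (1 - x) * p x)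
    (hp1 : |p1| ≤ K)
    (hT : ∀ z ∈ Icc (0:ℝ) 1, |p z - p α - p1 * (z - α)| ≤ K * (z - α) ^ 2)
    (hR0 : R 0 = 0)
    (hR : ∀ y ∈ Ioo (-1) (1 / α - 1), HasDerivAt R
      (y * (1 / (1 + y) + α / (1 - α * (1 + y)) + α * p (α * (1 + y)))) y) :
    (∀ y, |y| ≤ 1 / 4 → |R y - (1 + α / (1 - α) + α * p α) / 2 * y ^ 2
      - ((-1 + α ^ 2 / (1 - α) ^ 2 + α ^ 2 * p1) / 3) * y ^ 3| ≤ (18 + K) * y ^ 4) ∧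
    |(-1 + α ^ 2 / (1 - α) ^ 2 + α ^ 2 * p1) / 3| ≤ 18 + K ∧
    (∀ y ∈ Ioo (-1) (1 / α - 1), c * y ^ 2 / (2 * (1 + |y|)) ≤ R y) ∧
    c ≤ 1 + α / (1 - α) + α * p α := by
  have hL : 1 / 2 ≤ 1 / α - 1 := by
    have : 3 / 2 ≤ 1 / α := by rw [le_div_iff₀ hα]; linarith
    linarith
  have hδ : 1 / 3 ≤ 1 - α := by linarith
  have hδ0 : 0 < 1 - α := by linarith
  have hβ : α / (1 - α) ≤ 2 := by rw [div_le_iff₀ hδ0]; linarith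
  have hβ0 : 0 < α / (1 - α) := by positivity
  have hglow : ∀ y ∈ Ioo (-1) (1 / α - 1),
      c / (1 + y) ≤ 1 / (1 + y) + α / (1 - α * (1 + y)) + α * p (α * (1 + y)) := by
    intro y hy
    have y1 : 0 < 1 + y := by linarith [hy.1]
    have x0 : 0 < α * (1 + y) := by positivity
    have x1 : 0 < 1 - α * (1 + y) := by
      have : 1 + y < 1 / α := by linarith [hy.2]
      rw [lt_div_iff₀ hα] at this
      linarith
    have h := hlow (α * (1 + y)) ⟨x0.le, by linarith⟩
    have e : 1 / (1 + y) + α / (1 - α * (1 + y)) + α * p (α * (1 + y)) =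
      (1 + α * (1 + y) * (1 - α * (1 + y)) * p (α * (1 + y))) / ((1 + y) * (1 - α * (1 + y))) := by
      have n1 := x1.ne'
      have n2 := y1.ne'
      rw [div_add_div _ _ n2 n1, div_add' _ _ _ (mul_ne_zero n2 n1)]
      congr 1
      ring
    rw [e]
    calc c / (1 + y) ≤ c / ((1 + y) * (1 - α * (1 + y))) := by
          gcongr
          nlinarith
      _ ≤ _ := by gcongr
  refine ⟨?_, ?_, ?_, ?_⟩
  · intro y hy
    have hin : ∀ s ∈ Icc (-|y|) |y|, |s| ≤ |y| := fun s hs => abs_le.2 hs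
    have key := Convex.norm_image_sub_le_of_norm_hasDerivWithin_le (s := Icc (-|y|) |y|)
      (f := fun y => R y - (1 + α / (1 - α) + α * p α) / 2 * y ^ 2
        - ((-1 + α ^ 2 / (1 - α) ^ 2 + α ^ 2 * p1) / 3) * y ^ 3)
      (f' := fun y => y * ((1 / (1 + y) + α / (1 - α * (1 + y)) + α * p (α * (1 + y)))
        - (1 + α / (1 - α) + α * p α) - (-1 + α ^ 2 / (1 - α) ^ 2 + α ^ 2 * p1) * y))
      (C := (18 + K) * |y| ^ 3) (x := 0) (y := y)
      (fun w hw => by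
        have hw' := abs_le.1 ((hin w hw).trans hy)
        have h1 := hR w ⟨by linarith, by linarith⟩
        have h2 := ((hasDerivAt_pow 2 w).const_mul ((1 + α / (1 - α) + α * p α) / 2))
        have h3 := ((hasDerivAt_pow 3 w).const_mul
          ((-1 + α ^ 2 / (1 - α) ^ 2 + α ^ 2 * p1) / 3))
        refine HasDerivAt.hasDerivWithinAt ?_
        refine ((h1.sub h2).sub h3).congr_deriv ?_
        norm_num
        ring)
      (fun w hw => by
        have hw1 := (hin w hw)
        have hw' := abs_le.1 (hw1.trans hy)
        have y1 : 3 / 4 ≤ 1 + w := by linarith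
        have y1' : 0 < 1 + w := by linarith
        have x0 : 0 < α * (1 + w) := by positivity
        have x1 : (1 - α) / 2 ≤ 1 - α * (1 + w) := by nlinarith
        have x1' : 0 < 1 - α * (1 + w) := by linarith
        have b1 : |1 / (1 + w) - 1 + w| ≤ 2 * w ^ 2 := by
          have : 1 / (1 + w) - 1 + w = w ^ 2 / (1 + w) := by field_simp; ring
          rw [this, abs_of_nonneg (by positivity), div_le_iff₀ y1']
          nlinarith [sq_nonneg w]
        have b2 : |α / (1 - α * (1 + w)) - α / (1 - α) - α ^ 2 / (1 - α) ^ 2 * w| ≤ 16 * w ^ 2 := by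
          have : α / (1 - α * (1 + w)) - α / (1 - α) - α ^ 2 / (1 - α) ^ 2 * w =
            (α / (1 - α)) ^ 3 * w ^ 2 * ((1 - α) / (1 - α * (1 + w))) := by
            have n1 := x1'.ne'
            have n2 := hδ0.ne'
            field_simp
            ring
          rw [this, abs_of_nonneg (by positivity)]
          have q : (1 - α) / (1 - α * (1 + w)) ≤ 2 := by rw [div_le_iff₀ x1']; linarith
          calc _ ≤ 2 ^ 3 * w ^ 2 * 2 := by gcongr
            _ = _ := by ring
        have b3 : |α * (p (α * (1 + w)) - p α - p1 * (α * (1 + w) - α))| ≤ K * w ^ 2 := by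
          have := hT (α * (1 + w)) ⟨x0.le, by linarith⟩
          rw [abs_mul, abs_of_pos hα]
          calc _ ≤ 1 * (K * (α * (1 + w) - α) ^ 2) := by gcongr; linarith
            _ = K * (α ^ 2 * w ^ 2) := by ring
            _ ≤ K * (1 * w ^ 2) := by gcongr; nlinarith
            _ = _ := by ring
        have e : ((1 / (1 + w) + α / (1 - α * (1 + w)) + α * p (α * (1 + w)))
          - (1 + α / (1 - α) + α * p α) - (-1 + α ^ 2 / (1 - α) ^ 2 + α ^ 2 * p1) * w) =
          (1 / (1 + w) - 1 + w) +
          (α / (1 - α * (1 + w)) - α / (1 - α) - α ^ 2 / (1 - α) ^ 2 * w) +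
          α * (p (α * (1 + w)) - p α - p1 * (α * (1 + w) - α)) := by ring
        rw [Real.norm_eq_abs, abs_mul, e]
        have tot := (abs_add_three (1 / (1 + w) - 1 + w)
          (α / (1 - α * (1 + w)) - α / (1 - α) - α ^ 2 / (1 - α) ^ 2 * w)
          (α * (p (α * (1 + w)) - p α - p1 * (α * (1 + w) - α))))
        have tot2 := tot.trans (add_le_add (add_le_add b1 b2) b3)
        have hw2 : w ^ 2 ≤ |y| ^ 2 := by rw [← sq_abs]; gcongr
        calc _ ≤ |y| * (2 * w ^ 2 + 16 * w ^ 2 + K * w ^ 2) := by gcongr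
          _ = |y| * ((18 + K) * w ^ 2) := by ring
          _ ≤ |y| * ((18 + K) * |y| ^ 2) := by gcongr
          _ = _ := by ring)
      (convex_Icc _ _) ⟨by simp, by simp⟩ ⟨neg_abs_le y, le_abs_self y⟩
    simp only [hR0, Real.norm_eq_abs] at key
    have e : (18 + K) * |y| ^ 3 * |y - 0| = (18 + K) * y ^ 4 := by
      have : y ^ 4 = |y| ^ 3 * |y| := by
        rw [← pow_succ]; exact (Even.pow_abs (by decide : Even 4) y).symm
      rw [this, sub_zero]; ring
    rw [e] at key
    simpa using key
  · have e : α ^ 2 / (1 - α) ^ 2 = (α / (1 - α)) ^ 2 := by rw [div_pow]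
    have h1 : (α / (1 - α)) ^ 2 ≤ 4 := by nlinarith
    have h2 : |α ^ 2 * p1| ≤ K := by
      rw [abs_mul, abs_of_nonneg (by positivity)]
      have : α ^ 2 ≤ 1 := by nlinarith
      calc _ ≤ 1 * K := by gcongr
        _ = K := by ring
    have h3 : 0 ≤ (α / (1 - α)) ^ 2 := by positivity
    rw [e]
    rw [abs_le] at h2 ⊢
    constructor <;> linarith [h2.1, h2.2]
  · intro y hy
    rcases le_total 0 y with h | h
    · have hmem : ∀ s ∈ Icc 0 y, s ∈ Ioo (-1) (1 / α - 1) := fun s hs =>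
        ⟨by linarith [hs.1], by linarith [hs.2, hy.2]⟩
      have hD : ∀ s ∈ Icc 0 y, HasDerivAt (fun s => R s - c * s ^ 2 / (2 * (1 + s)))
          (s * (1 / (1 + s) + α / (1 - α * (1 + s)) + α * p (α * (1 + s)))
            - c * (2 * s + s ^ 2) / (2 * (1 + s) ^ 2)) s := by
        intro s hs
        have s1 : 1 + s ≠ 0 := by linarith [hs.1]
        have h2 := ((hasDerivAt_pow 2 s).const_mul c).div
          (((hasDerivAt_id s).const_add 1).const_mul 2) (by simpa using s1)
        refine ((hR s (hmem s hs)).sub h2).congr_deriv ?_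
        congr 1
        simp
        field_simp
        ring
      have mono : MonotoneOn (fun s => R s - c * s ^ 2 / (2 * (1 + s))) (Icc 0 y) := by
        refine monotoneOn_of_deriv_nonneg (convex_Icc _ _)
          (fun s hs => (hD s hs).continuousAt.continuousWithinAt)
          (fun s hs => (hD s (interior_subset hs)).differentiableAt.differentiableWithinAt) ?_
        intro s hs
        have hs' := interior_subset hs
        rw [(hD s hs').deriv]
        have hg := hglow s (hmem s hs')
        have s0 : 0 ≤ s := hs'.1
        have := mul_le_mul_of_nonneg_left hg s0
        have : c * (2 * s + s ^ 2) / (2 * (1 + s) ^ 2) ≤ s * (c / (1 + s)) := by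
          rw [← mul_div_assoc, div_le_div_iff₀ (by positivity) (by positivity)]
          have : 0 ≤ c * s ^ 2 * (1 + s) := by positivity
          nlinarith
        linarith
      have := mono ⟨le_refl 0, h⟩ ⟨h, le_refl y⟩ h
      simp [hR0] at this
      rw [abs_of_nonneg h]
      linarith
    · have hmem : ∀ s ∈ Icc y 0, s ∈ Ioo (-1) (1 / α - 1) := fun s hs =>
        ⟨by linarith [hs.1, hy.1], by linarith [hs.2]⟩
      have hD : ∀ s ∈ Icc y 0, HasDerivAt (fun s => R s - c / 2 * s ^ 2)
          (s * (1 / (1 + s) + α / (1 - α * (1 + s)) + α * p (α * (1 + s)))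
            - s * c) s := by
        intro s hs
        have h2 := ((hasDerivAt_pow 2 s).const_mul (c / 2))
        refine ((hR s (hmem s hs)).sub h2).congr_deriv ?_
        congr 1
        simp
        ring
      have anti : AntitoneOn (fun s => R s - c / 2 * s ^ 2) (Icc y 0) := by
        refine antitoneOn_of_deriv_nonpos (convex_Icc _ _)
          (fun s hs => (hD s hs).continuousAt.continuousWithinAt)
          (fun s hs => (hD s (interior_subset hs)).differentiableAt.differentiableWithinAt) ?_
        intro s hs
        have hs' := interior_subset hs
        rw [(hD s hs').deriv]
        have hg := hglow s (hmem s hs')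
        have s0 : s ≤ 0 := hs'.2
        have s1 : 0 < 1 + s := by linarith [(hmem s hs').1]
        have : c ≤ c / (1 + s) := by
          rw [le_div_iff₀ s1]; nlinarith
        nlinarith
      have := anti ⟨le_refl y, h⟩ ⟨h, le_refl 0⟩ h
      simp [hR0] at this
      refine le_trans ?_ this
      rw [div_le_iff₀ (by positivity)]
      have : 0 ≤ c * y ^ 2 * |y| := by positivity
      nlinarith
  · have := hglow 0 ⟨by norm_num, by linarith⟩
    simpa using this

lemma aux_conv (t a b K : ℝ) (ht : t ∈ Icc (0:ℝ) 1) (ha : |a| ≤ K) (hb : |b| ≤ K) :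
    |(1 - t) * a + t * b| ≤ K := by
  have h1 : 0 ≤ 1 - t := by linarith [ht.2]
  have h0 := ht.1
  rw [abs_le] at *
  constructor <;> nlinarith [mul_le_mul_of_nonneg_left ha.1 h1, mul_le_mul_of_nonneg_left ha.2 h1,
    mul_le_mul_of_nonneg_left hb.1 h0, mul_le_mul_of_nonneg_left hb.2 h0]

set_option maxHeartbeats 2000000 in
theorem bergman_cp1_interior_laplace_asymptotics_of_Q
    (f0 f1 : ℝ → ℝ) (hf0 : ContDiff ℝ (⊤ : ℕ∞) f0) (hf1 : ContDiff ℝ (⊤ : ℕ∞) f1)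
    (hG0 : ∀ x ∈ Set.Ioo (0:ℝ) 1, 0 < iteratedDeriv 2 (Gt f0 f1 0) x)
    (hG1 : ∀ x ∈ Set.Ioo (0:ℝ) 1, 0 < iteratedDeriv 2 (Gt f0 f1 1) x) :
    ∃ C : ℝ, 0 < C ∧
      ∀ N : ℕ, 1 ≤ N → ∀ t ∈ Set.Icc (0:ℝ) 1, ∀ α : ℝ,
        (N : ℝ) ^ (-(3:ℝ)/4) ≤ α → α ≤ 2/3 →
        |Qnorm (Gt f0 f1 t) N α -
            (2 * Real.pi) ^ ((3:ℝ)/2) *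
              ((N : ℝ) * iteratedDeriv 2 (Gt f0 f1 t) α) ^ (-(1:ℝ)/2)|
          ≤ C * ((N : ℝ) * iteratedDeriv 2 (Gt f0 f1 t) α) ^ (-(1:ℝ)/2) * ((N:ℝ) * α)⁻¹ := by
  obtain ⟨d0, e0, q0c, K0, hK0, B0⟩ := aux_smooth f0 hf0
  obtain ⟨d1, e1, q1c, K1, hK1, B1⟩ := aux_smooth f1 hf1
  obtain ⟨c0, hc0, L0⟩ := aux_min (deriv (deriv f0)) q0c (fun x hx => by
    have := hG0 x hx
    rw [(aux_Gderiv f0 f1 0 d0 d1 e0 e1 x hx).2.2] at this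
    simpa using this)
  obtain ⟨c1, hc1, L1⟩ := aux_min (deriv (deriv f1)) q1c (fun x hx => by
    have := hG1 x hx
    rw [(aux_Gderiv f0 f1 1 d0 d1 e0 e1 x hx).2.2] at this
    simpa using this)
  obtain ⟨c, hc, hcc0, hcc1⟩ : ∃ c, 0 < c ∧ c ≤ c0 ∧ c ≤ c1 :=
    ⟨min c0 c1, lt_min hc0 hc1, min_le_left _ _, min_le_right _ _⟩
  obtain ⟨K, hK, hKK0, hKK1⟩ : ∃ K, 0 < K ∧ K0 ≤ K ∧ K1 ≤ K :=
    ⟨max K0 K1, lt_max_of_lt_left hK0, le_max_left _ _, le_max_right _ _⟩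
  obtain ⟨C, hC, Lap⟩ := aux_laplace (c / 10) (18 + K) (by positivity) (by positivity)
  refine ⟨2 * Real.pi * C * Real.sqrt (3 + K), by positivity, ?_⟩
  intro N hN t ht α hα1 hα2
  have hN1 : (1:ℝ) ≤ N := by exact_mod_cast hN
  have hN0 : (0:ℝ) < N := by linarith
  have hα : 0 < α := lt_of_lt_of_le (Real.rpow_pos_of_pos hN0 _) hα1
  have hl : 1 ≤ (N:ℝ) * α := by
    have h1 : (N:ℝ) ^ (-1:ℝ) ≤ (N : ℝ) ^ (-(3:ℝ)/4) :=
      Real.rpow_le_rpow_of_exponent_le hN1 (by norm_num)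
    rw [Real.rpow_neg_one] at h1
    calc (1:ℝ) = N * (N:ℝ)⁻¹ := by field_simp
      _ ≤ N * α := by gcongr; linarith
  have t0 : 0 ≤ t := ht.1
  have t1 : 0 ≤ 1 - t := by linarith [ht.2]
  have hαI : α ∈ Icc (0:ℝ) 1 := ⟨hα.le, by linarith⟩
  have hαO : α ∈ Ioo (0:ℝ) 1 := ⟨hα, by linarith⟩
  set G := Gt f0 f1 t with hG
  set p : ℝ → ℝ := fun x => (1 - t) * deriv (deriv f0) x + t * deriv (deriv f1) x with hp
  set p1 : ℝ := (1 - t) * deriv (deriv (deriv f0)) α + t * deriv (deriv (deriv f1)) α with hp1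
  set R := RPhase G α with hRdef
  have hlow : ∀ x ∈ Icc (0:ℝ) 1, c ≤ 1 + x * (1 - x) * p x := by
    intro x hx
    have a0 := mul_le_mul_of_nonneg_left (hcc0.trans (L0 x hx)) t1
    have a1 := mul_le_mul_of_nonneg_left (hcc1.trans (L1 x hx)) t0
    simp only [hp]
    nlinarith
  have hpK : |p α| ≤ K :=
    aux_conv t _ _ K ht ((B0 α hαI).1.trans hKK0) ((B1 α hαI).1.trans hKK1)
  have hp1K : |p1| ≤ K :=
    aux_conv t _ _ K ht ((B0 α hαI).2.1.trans hKK0) ((B1 α hαI).2.1.trans hKK1)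
  have hT : ∀ z ∈ Icc (0:ℝ) 1, |p z - p α - p1 * (z - α)| ≤ K * (z - α) ^ 2 := by
    intro z hz
    have := aux_conv t _ _ (K * (z - α) ^ 2) ht
      (((B0 α hαI).2.2 z hz).trans (by gcongr)) (((B1 α hαI).2.2 z hz).trans (by gcongr))
    convert this using 2
    simp only [hp, hp1]; ring
  have hR0 : R 0 = 0 := by simp [hRdef, RPhase, Phase]
  have hRd : ∀ y ∈ Ioo (-1) (1 / α - 1), HasDerivAt R
      (y * (1 / (1 + y) + α / (1 - α * (1 + y)) + α * p (α * (1 + y)))) y := by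
    intro y hy
    have y1 : 0 < 1 + y := by linarith [hy.1]
    have x0 : 0 < α * (1 + y) := by positivity
    have x1 : 0 < 1 - α * (1 + y) := by
      have : 1 + y < 1 / α := by linarith [hy.2]
      rw [lt_div_iff₀ hα] at this
      linarith
    obtain ⟨g1, g2, -⟩ := aux_Gderiv f0 f1 t d0 d1 e0 e1 (α * (1 + y)) ⟨x0, by linarith⟩
    have h1 : HasDerivAt (Phase G α) ((α * (1 + y) - α) * (1 / (α * (1 + y)) +
        1 / (1 - α * (1 + y)) + p (α * (1 + y)))) (α * (1 + y)) := by
      have := (((hasDerivAt_id (α * (1 + y))).sub_const α).mul g2).sub (g1.sub_const (G α))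
      refine this.congr_deriv ?_
      simp [hp]
    have h2 : HasDerivAt (fun y : ℝ => α * (1 + y)) α y := by
      simpa using ((hasDerivAt_id y).const_add 1).const_mul α
    have h3 := (HasDerivAt.comp y h1 h2).const_mul (1 / α)
    refine h3.congr_deriv ?_
    generalize p (α * (1 + y)) = P
    have n1 := x1.ne'
    have n2 := y1.ne'
    have : 1 / (α * (1 + y)) = 1 / α * (1 / (1 + y)) := by field_simp
    rw [this]
    have hα' := hα.ne'
    generalize 1 / (1 + y) = U
    rw [show α / (1 - α * (1 + y)) = α * (1 / (1 - α * (1 + y))) by ring]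
    generalize 1 / (1 - α * (1 + y)) = V
    field_simp
    ring
  obtain ⟨Q1, Q2, Q3, Q4⟩ := aux_phase p R p1 c K α hc hK hα hα2 hlow hp1K hT hR0 hRd
  set a := 1 + α / (1 - α) + α * p α with hadef
  set b := (-1 + α ^ 2 / (1 - α) ^ 2 + α ^ 2 * p1) / 3 with hbdef
  have hL : 1 / 2 ≤ 1 / α - 1 := by
    have : 3 / 2 ≤ 1 / α := by rw [le_div_iff₀ hα]; linarith
    linarith
  have main := Lap (N * α) a b (1 / α - 1) R hl (by linarith) (by linarith) Q2
    (fun y hy => (hRd y hy).continuousAt.continuousWithinAt)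
    (fun y hy => by
      have hy' := abs_le.1 hy
      refine le_trans ?_ (Q3 y ⟨by linarith, by linarith⟩)
      rw [le_div_iff₀ (by positivity)]
      have : 0 ≤ c * y ^ 2 := by positivity
      nlinarith)
    Q1
    (fun y hym hy => by
      refine le_trans ?_ (Q3 y hym)
      rw [le_div_iff₀ (by positivity)]
      rw [← sq_abs y]
      have : 0 ≤ c * |y| := by positivity
      nlinarith)
  -- identify the second derivative
  have hGa : iteratedDeriv 2 G α = a / α := by
    rw [hG, (aux_Gderiv f0 f1 t d0 d1 e0 e1 α hαO).2.2, hadef]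
    have n : 1 - α ≠ 0 := by linarith [hαO.2]
    have : (1 - t) * deriv (deriv f0) α + t * deriv (deriv f1) α = p α := rfl
    rw [this]
    field_simp
  have ha0 : 0 < a := by linarith
  have haK : a ≤ 3 + K := by
    have h1 : α / (1 - α) ≤ 2 := by rw [div_le_iff₀ (by linarith)]; linarith
    have h2 : α * p α ≤ K := by
      have := (abs_le.1 hpK).2
      nlinarith
    linarith
  -- change of variables
  have hQ : Qnorm G N α = 2 * Real.pi * (α *
      ∫ y in Ioo (-1) (1 / α - 1), Real.exp (-(N * α * R y))) := by
    have cv := intervalIntegral.integral_comp_mul_add (a := -1) (b := 1 / α - 1)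
      (fun x => Real.exp (-(N : ℝ) * Phase G α x)) hα.ne' α
    have b1 : α * (-1) + α = 0 := by ring
    have b2 : α * (1 / α - 1) + α = 1 := by field_simp; ring
    rw [b1, b2, smul_eq_mul] at cv
    have hi : ∫ x in (0:ℝ)..1, Real.exp (-(N : ℝ) * Phase G α x) =
        α * ∫ y in (-1:ℝ)..(1 / α - 1), Real.exp (-(N : ℝ) * Phase G α (α * y + α)) := by
      rw [cv]; field_simp
    unfold Qnorm
    rw [hi, intervalIntegral.integral_of_le (by linarith),
      MeasureTheory.integral_Ioc_eq_integral_Ioo]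
    congr 3
    funext y
    congr 1
    simp only [hRdef, RPhase]
    rw [show α * (1 + y) = α * y + α by ring]
    field_simp
  have hs : ((N : ℝ) * iteratedDeriv 2 G α) ^ (-(1:ℝ)/2) =
      α * (Real.sqrt (N * α * a))⁻¹ := by
    rw [hGa, show (-(1:ℝ)/2) = -(1/2) by ring, Real.rpow_neg (by positivity),
      ← Real.sqrt_eq_rpow]
    have : N * α * a = α ^ 2 * (N * (a / α)) := by field_simp
    rw [this, Real.sqrt_mul (sq_nonneg α) (N * (a / α)), Real.sqrt_sq hα.le]
    field_simp
  have h32 : (2 * Real.pi) ^ ((3:ℝ)/2) = 2 * Real.pi * Real.sqrt (2 * Real.pi) := by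
    rw [show (3:ℝ)/2 = 1 + 1/2 by norm_num, Real.rpow_add (by positivity), Real.rpow_one,
      ← Real.sqrt_eq_rpow]
  have hsq : Real.sqrt (2 * Real.pi / (N * α * a)) =
      Real.sqrt (2 * Real.pi) * (Real.sqrt (N * α * a))⁻¹ := by
    rw [Real.sqrt_div (by positivity)]; rfl
  rw [hsq] at main
  rw [hQ, hs, h32]
  set I := ∫ y in Ioo (-1) (1 / α - 1), Real.exp (-(N * α * R y)) with hI
  have e1 : 2 * Real.pi * (α * I) - 2 * Real.pi * Real.sqrt (2 * Real.pi) *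
      (α * (Real.sqrt (N * α * a))⁻¹) =
      (2 * Real.pi * α) * (I - Real.sqrt (2 * Real.pi) * (Real.sqrt (N * α * a))⁻¹) := by ring
  rw [e1, abs_mul, abs_of_pos (by positivity)]
  have hla : (Real.sqrt (N * α))⁻¹ ≤ Real.sqrt (3 + K) * (Real.sqrt (N * α * a))⁻¹ := by
    rw [Real.sqrt_mul (by positivity) a]
    have h1 : Real.sqrt a ≤ Real.sqrt (3 + K) := Real.sqrt_le_sqrt haK
    have h2 : 0 < Real.sqrt a := Real.sqrt_pos.2 ha0
    have h3 : 0 < Real.sqrt (N * α) := Real.sqrt_pos.2 (by positivity)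
    rw [mul_inv]
    calc (Real.sqrt (N * α))⁻¹ = Real.sqrt a * ((Real.sqrt (N * α))⁻¹ * (Real.sqrt a)⁻¹) := by
          field_simp
      _ ≤ _ := by gcongr
  calc _ ≤ (2 * Real.pi * α) * (C * ((N * α)⁻¹ * (Real.sqrt (N * α))⁻¹)) := by gcongr
    _ ≤ (2 * Real.pi * α) * (C * ((N * α)⁻¹ *
        (Real.sqrt (3 + K) * (Real.sqrt (N * α * a))⁻¹))) := by gcongr
    _ = _ := by ring
end

section
/- There exists a constant C > 0 such that for all integers N ≥ 1, all t ∈ [0,1], and all α with N^{−3/4} ≤ α ≤ 2/3: 1/C ≤ q_t^N(α) ≤ C, and |q_t^N(α) − (1 + α·(1−α)·f_t''(α))^{−1/2}| ≤ C/(N·α); here (1 + α·(1−α)·f_t''(α))^{−1/2} = (G_P''(α)/G_t''(α))^{1/2}. -/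
open Set Filter

lemma stein (N α : ℝ) (p p1 W W1 g g1 : ℝ → ℝ) (hWc : ContinuousOn W (Icc 0 1))
    (hW : ∀ x ∈ Ioo (0:ℝ) 1, HasDerivAt W (W1 x) x)
    (hpW : ∀ x ∈ Ioo (0:ℝ) 1, p x * W1 x = -N * (x - α) * W x)
    (hp : ∀ x ∈ Icc (0:ℝ) 1, HasDerivAt p (p1 x) x) (hp1c : ContinuousOn p1 (Icc 0 1))
    (hp0 : p 0 = 0) (hp1 : p 1 = 0)
    (hg : ∀ x ∈ Icc (0:ℝ) 1, HasDerivAt g (g1 x) x) (hg1c : ContinuousOn g1 (Icc 0 1)) :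
    N * ∫ x in (0:ℝ)..1, (x - α) * g x * W x =
      ∫ x in (0:ℝ)..1, (g1 x * p x + g x * p1 x) * W x := by
  have hpc : ContinuousOn p (Icc 0 1) := fun x hx => (hp x hx).continuousAt.continuousWithinAt
  have hgc : ContinuousOn g (Icc 0 1) := fun x hx => (hg x hx).continuousAt.continuousWithinAt
  have c1 : ContinuousOn (fun x => (g1 x * p x + g x * p1 x) * W x) (uIcc 0 1) := by
    rw [uIcc_of_le zero_le_one]; fun_prop
  have c2 : ContinuousOn (fun x => N * ((x - α) * g x * W x)) (uIcc 0 1) := by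
    rw [uIcc_of_le zero_le_one]; fun_prop
  have key := intervalIntegral.integral_eq_sub_of_hasDerivAt_of_le (zero_le_one (α := ℝ))
    (f := fun x => g x * p x * W x)
    (f' := fun x => (g1 x * p x + g x * p1 x) * W x - N * ((x - α) * g x * W x))
    (by fun_prop) (fun x hx => by
      have hx' := Ioo_subset_Icc_self hx
      refine HasDerivAt.congr_deriv (((hg x hx').fun_mul (hp x hx')).fun_mul (hW x hx)) ?_
      linear_combination (g x) * hpW x hx) (c1.intervalIntegrable.sub c2.intervalIntegrable)
  rw [intervalIntegral.integral_sub c1.intervalIntegrable c2.intervalIntegrable,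
    intervalIntegral.integral_const_mul] at key
  simp only [hp0, hp1] at key
  linarith

lemma wbound (W g k : ℝ → ℝ) (hWc : ContinuousOn W (Icc 0 1)) (hW0 : ∀ x ∈ Icc (0:ℝ) 1, 0 ≤ W x)
    (_ : ContinuousOn g (Icc 0 1)) (hk : ContinuousOn k (Icc 0 1))
    (h : ∀ x ∈ Icc (0:ℝ) 1, |g x| ≤ k x) :
    |∫ x in (0:ℝ)..1, g x * W x| ≤ ∫ x in (0:ℝ)..1, k x * W x := by
  have c1 : ContinuousOn (fun x => k x * W x) (uIcc 0 1) := by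
    rw [uIcc_of_le zero_le_one]; fun_prop
  rw [← Real.norm_eq_abs]
  refine intervalIntegral.norm_integral_le_of_norm_le zero_le_one ?_ c1.intervalIntegrable
  refine Filter.Eventually.of_forall fun x hx => ?_
  have hx' := Ioc_subset_Icc_self hx
  rw [norm_mul, Real.norm_eq_abs, Real.norm_eq_abs, abs_of_nonneg (hW0 x hx')]
  exact mul_le_mul_of_nonneg_right (h x hx') (hW0 x hx')

/-- Taylor type estimate -/
lemma mvt_bound (R R1 : ℝ → ℝ) (α B : ℝ) (n : ℕ) (hα : α ∈ Icc (0:ℝ) 1) (hB : 0 ≤ B)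
    (hR : ∀ x ∈ Icc (0:ℝ) 1, HasDerivAt R (R1 x) x)
    (h1 : ∀ x ∈ Icc (0:ℝ) 1, |R1 x| ≤ B * |x - α| ^ n) (x : ℝ) (hx : x ∈ Icc (0:ℝ) 1) :
    |R x - R α| ≤ B * |x - α| ^ (n + 1) := by
  have hsub : uIcc α x ⊆ Icc 0 1 := (ordConnected_Icc).uIcc_subset hα hx
  have := (convex_uIcc α x).norm_image_sub_le_of_norm_hasDerivWithin_le (f := R) (f' := R1)
    (C := B * |x - α| ^ n) (fun y hy => (hR y (hsub hy)).hasDerivWithinAt)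
    (fun y hy => (h1 y (hsub hy)).trans (by
      have : |y - α| ≤ |x - α| := by
        have := abs_sub_left_of_mem_uIcc hy
        simpa using this
      gcongr)) left_mem_uIcc right_mem_uIcc
  simpa [pow_succ, mul_assoc] using this

set_option maxHeartbeats 1000000 in
lemma core (N α B : ℝ) (hN : 0 < N) (hα : α ∈ Icc (0:ℝ) 1) (p p1 p2 W W1 φ : ℝ → ℝ) (u0 u1 : ℝ)
    (hWc : ContinuousOn W (Icc 0 1)) (hW0 : ∀ x ∈ Icc (0:ℝ) 1, 0 ≤ W x)
    (hW : ∀ x ∈ Ioo (0:ℝ) 1, HasDerivAt W (W1 x) x)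
    (hpW : ∀ x ∈ Ioo (0:ℝ) 1, p x * W1 x = -N * (x - α) * W x)
    (hp : ∀ x ∈ Icc (0:ℝ) 1, HasDerivAt p (p1 x) x)
    (hpp : ∀ x ∈ Icc (0:ℝ) 1, HasDerivAt p1 (p2 x) x) (hp2c : ContinuousOn p2 (Icc 0 1))
    (hp0 : p 0 = 0) (hp1 : p 1 = 0)
    (hB : 0 ≤ B) (bp : ∀ x ∈ Icc (0:ℝ) 1, |p x| ≤ B) (bp1 : ∀ x ∈ Icc (0:ℝ) 1, |p1 x| ≤ B)
    (bp2 : ∀ x ∈ Icc (0:ℝ) 1, |p2 x| ≤ B) (hu0 : |u0| ≤ B) (hu1 : |u1| ≤ B)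
    (hφc : ContinuousOn φ (Icc 0 1))
    (hφ : ∀ x ∈ Icc (0:ℝ) 1, |φ x - (u0 / 2 * (x - α) ^ 2 + u1 / 3 * (x - α) ^ 3)|
      ≤ B * (x - α) ^ 4) :
    |N * (N * (∫ x in (0:ℝ)..1, φ x * W x) - u0 / 2 * p α * ∫ x in (0:ℝ)..1, W x)|
      ≤ 13 * B ^ 3 * ∫ x in (0:ℝ)..1, W x := by
  have hpc : ContinuousOn p (Icc 0 1) := fun x hx => (hp x hx).continuousAt.continuousWithinAt
  have hp1c : ContinuousOn p1 (Icc 0 1) := fun x hx => (hpp x hx).continuousAt.continuousWithinAt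
  have ii : ∀ g : ℝ → ℝ, ContinuousOn g (Icc 0 1) →
      IntervalIntegrable g MeasureTheory.volume 0 1 := fun g hg => by
    apply ContinuousOn.intervalIntegrable; rwa [uIcc_of_le zero_le_one]
  have ab : ∀ x ∈ Icc (0:ℝ) 1, |x - α| ≤ 1 := fun x hx => by
    rw [abs_le]; constructor <;> linarith [hx.1, hx.2, hα.1, hα.2]
  have st := fun g g1 => stein N α p p1 W W1 g g1 hWc hW hpW hp hp1c hp0 hp1
  have wb := fun g k => wbound W g k hWc hW0
  set m0 := ∫ x in (0:ℝ)..1, W x with hm0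
  have m0n : 0 ≤ m0 := intervalIntegral.integral_nonneg zero_le_one hW0
  set M1 := ∫ x in (0:ℝ)..1, (x - α) * W x with hM1
  set M2 := ∫ x in (0:ℝ)..1, (x - α) ^ 2 * W x with hM2
  set M3 := ∫ x in (0:ℝ)..1, (x - α) ^ 3 * W x with hM3
  set M4 := ∫ x in (0:ℝ)..1, (x - α) ^ 4 * W x with hM4
  have M2n : 0 ≤ M2 := intervalIntegral.integral_nonneg zero_le_one
    (fun x hx => mul_nonneg (sq_nonneg _) (hW0 x hx))
  have wb0 : ∀ (g : ℝ → ℝ) (c : ℝ), ContinuousOn g (Icc 0 1) → (∀ x ∈ Icc (0:ℝ) 1, |g x| ≤ c) →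
      |∫ x in (0:ℝ)..1, g x * W x| ≤ c * m0 := fun g c hg h => by
    have := wb g (fun _ => c) hg continuousOn_const h
    rwa [intervalIntegral.integral_const_mul] at this
  have wb2 : ∀ (g : ℝ → ℝ) (c : ℝ), ContinuousOn g (Icc 0 1) →
      (∀ x ∈ Icc (0:ℝ) 1, |g x| ≤ c * (x - α) ^ 2) →
      |∫ x in (0:ℝ)..1, g x * W x| ≤ c * M2 := fun g c hg h => by
    have := wb g (fun x => c * (x - α) ^ 2) hg (by fun_prop) h
    simp only [mul_assoc] at this
    rwa [intervalIntegral.integral_const_mul] at this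
  -- first moment
  have s1 : |N * M1| ≤ B * m0 := by
    have h := st (fun _ => 1) (fun _ => 0) (fun x _ => hasDerivAt_const _ _) continuousOn_const
    simp only [mul_one, zero_mul, zero_add, one_mul] at h
    rw [hM1, h]; exact wb0 _ _ hp1c bp1
  have s2 : |N * M2| ≤ 2 * B * m0 := by
    have h := st (fun x => x - α) (fun _ => 1)
      (fun x _ => (hasDerivAt_id x).sub_const α) continuousOn_const
    simp only [← pow_two] at h
    rw [hM2, h]
    refine wb0 _ _ (by fun_prop) fun x hx => ?_
    calc _ ≤ |1 * p x| + |(x - α) * p1 x| := abs_add_le _ _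
      _ ≤ B + 1 * B := by
        rw [one_mul, abs_mul]
        exact add_le_add (bp x hx) (mul_le_mul (ab x hx) (bp1 x hx) (abs_nonneg _) zero_le_one)
      _ = _ := by ring
  have s5 : |N * ∫ x in (0:ℝ)..1, (x - α) * p x * W x| ≤ 2 * B ^ 2 * m0 := by
    rw [st p p1 hp hp1c]
    refine wb0 _ _ (by fun_prop) fun x hx => ?_
    calc _ ≤ |p1 x * p x| + |p x * p1 x| := abs_add_le _ _
      _ ≤ B * B + B * B := by
        rw [abs_mul, abs_mul]
        have := bp x hx; have := bp1 x hx
        gcongr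
      _ = _ := by ring
  have s6 : |N * ∫ x in (0:ℝ)..1, (x - α) * p1 x * W x| ≤ 2 * B ^ 2 * m0 := by
    rw [st p1 p2 hpp hp2c]
    refine wb0 _ _ (by fun_prop) fun x hx => ?_
    calc _ ≤ |p2 x * p x| + |p1 x * p1 x| := abs_add_le _ _
      _ ≤ B * B + B * B := by
        rw [abs_mul, abs_mul]
        have := bp x hx; have := bp1 x hx; have := bp2 x hx
        gcongr
      _ = _ := by ring
  have s3 : |N * (N * M3)| ≤ 6 * B ^ 2 * m0 := by
    have h := st (fun x => (x - α) ^ 2) (fun x => 2 * (x - α))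
      (fun x _ => by simpa using ((hasDerivAt_id x).sub_const α).fun_pow 2) (by fun_prop)
    have e1 : M3 = ∫ x in (0:ℝ)..1, (x - α) * (x - α) ^ 2 * W x := by
      rw [hM3]; congr 1; ext x; ring
    have e2 : (∫ x in (0:ℝ)..1, (2 * (x - α) * p x + (x - α) ^ 2 * p1 x) * W x) =
        2 * (∫ x in (0:ℝ)..1, (x - α) * p x * W x) +
          ∫ x in (0:ℝ)..1, ((x - α) ^ 2 * p1 x) * W x := by
      rw [← intervalIntegral.integral_const_mul, ← intervalIntegral.integral_add
        (ii _ (by fun_prop)) (ii _ (by fun_prop))]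
      congr 1; ext x; ring
    have e3 := wb2 (fun x => (x - α) ^ 2 * p1 x) B (by fun_prop) (fun x hx => by
      rw [abs_mul, abs_of_nonneg (sq_nonneg (x - α)), mul_comm]
      have := bp1 x hx
      gcongr)
    rw [e1, h, e2]
    rw [abs_of_nonneg (by positivity)] at s2
    have e4 : N * |∫ x in (0:ℝ)..1, ((x - α) ^ 2 * p1 x) * W x| ≤ N * (B * M2) := by gcongr
    have e5 : B * (N * M2) ≤ B * (2 * B * m0) := by gcongr
    calc _ = |2 * (N * (∫ x in (0:ℝ)..1, (x - α) * p x * W x)) + N *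
          ∫ x in (0:ℝ)..1, ((x - α) ^ 2 * p1 x) * W x| := by congr 1; ring
      _ ≤ |2 * (N * (∫ x in (0:ℝ)..1, (x - α) * p x * W x))| + |N *
          ∫ x in (0:ℝ)..1, ((x - α) ^ 2 * p1 x) * W x| := abs_add_le _ _
      _ = 2 * |N * (∫ x in (0:ℝ)..1, (x - α) * p x * W x)| + N *
          |∫ x in (0:ℝ)..1, ((x - α) ^ 2 * p1 x) * W x| := by
          rw [abs_mul 2, abs_mul N (∫ x in (0:ℝ)..1, ((x - α) ^ 2 * p1 x) * W x),
            abs_of_pos hN, abs_of_pos (two_pos)]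
      _ ≤ _ := by nlinarith
  have s4 : |N * (N * M4)| ≤ 8 * B ^ 2 * m0 := by
    have h := st (fun x => (x - α) ^ 3) (fun x => 3 * (x - α) ^ 2)
      (fun x _ => by simpa using ((hasDerivAt_id x).sub_const α).fun_pow 3) (by fun_prop)
    have e1 : M4 = ∫ x in (0:ℝ)..1, (x - α) * (x - α) ^ 3 * W x := by
      rw [hM4]; congr 1; ext x; ring
    have e3 := wb2 (fun x => 3 * (x - α) ^ 2 * p x + (x - α) ^ 3 * p1 x) (4 * B) (by fun_prop)
      (fun x hx => by
        have h1 := bp1 x hx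
        have h0 := bp x hx
        have h2 := ab x hx
        calc _ = (x - α) ^ 2 * |3 * p x + (x - α) * p1 x| := by
              rw [← abs_of_nonneg (sq_nonneg (x - α)), ← abs_mul,
                abs_of_nonneg (sq_nonneg (x - α))]
              congr 1; ring
          _ ≤ (x - α) ^ 2 * (3 * B + 1 * B) := by
              gcongr
              refine (abs_add_le _ _).trans ?_
              rw [abs_mul, abs_mul, abs_of_pos (three_pos)]
              gcongr
          _ = _ := by ring)
    rw [abs_mul, abs_of_pos hN, e1, h]
    rw [abs_of_nonneg (by positivity)] at s2
    have e4 : N * |∫ x in (0:ℝ)..1, (3 * (x - α) ^ 2 * p x + (x - α) ^ 3 * p1 x) * W x| ≤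
      N * (4 * B * M2) := by gcongr
    have e5 : B * (N * M2) ≤ B * (2 * B * m0) := by gcongr
    nlinarith
  have s7 : |N * (N * M2 - p α * m0)| ≤ 5 * B ^ 2 * m0 := by
    have h := st (fun x => x - α) (fun _ => 1)
      (fun x _ => (hasDerivAt_id x).sub_const α) continuousOn_const
    simp only [← pow_two] at h
    have tay : ∀ x ∈ Icc (0:ℝ) 1, |p x - p α - p1 α * (x - α)| ≤ B * (x - α) ^ 2 := by
      intro x hx
      have := mvt_bound (fun x => p x - p1 α * (x - α)) (fun x => p1 x - p1 α) α B 1 hα hB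
        (fun x hx => by
          simpa using (hp x hx).fun_sub (((hasDerivAt_id x).sub_const α).const_mul (p1 α)))
        (fun x hx => by
          simpa using mvt_bound p1 p2 α B 0 hα hB hpp (by simpa using bp2) x hx) x hx
      simp only [sub_self, mul_zero, sub_zero, sq_abs, Nat.reduceAdd] at this
      rwa [sub_right_comm]
    have e1 : N * M2 - p α * m0 = (∫ x in (0:ℝ)..1, (p x - p α - p1 α * (x - α)) * W x)
        + p1 α * M1 + ∫ x in (0:ℝ)..1, (x - α) * p1 x * W x := by
      rw [hM2, h, hm0, hM1, ← intervalIntegral.integral_const_mul,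
        ← intervalIntegral.integral_const_mul,
        ← intervalIntegral.integral_sub (ii _ (by fun_prop)) (ii _ (by fun_prop)),
        ← intervalIntegral.integral_add (ii _ (by fun_prop)) (ii _ (by fun_prop)),
        ← intervalIntegral.integral_add (ii _ (by fun_prop)) (ii _ (by fun_prop))]
      congr 1; ext x; ring
    have e2 := wb2 (fun x => p x - p α - p1 α * (x - α)) B (by fun_prop) tay
    rw [e1]
    rw [abs_of_nonneg (by positivity)] at s2
    have e4 : N * |∫ x in (0:ℝ)..1, (p x - p α - p1 α * (x - α)) * W x| ≤ N * (B * M2) := by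
      gcongr
    have e5 : B * (N * M2) ≤ B * (2 * B * m0) := by gcongr
    have e6 : |p1 α| * |N * M1| ≤ B * (B * m0) := by
      have := bp1 α hα
      gcongr
    calc _ = |N * (∫ x in (0:ℝ)..1, (p x - p α - p1 α * (x - α)) * W x)
        + p1 α * (N * M1) + N * ∫ x in (0:ℝ)..1, (x - α) * p1 x * W x| := by congr 1; ring
      _ ≤ |N * (∫ x in (0:ℝ)..1, (p x - p α - p1 α * (x - α)) * W x)|
        + |p1 α * (N * M1)| + |N * ∫ x in (0:ℝ)..1, (x - α) * p1 x * W x| := abs_add_three _ _ _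
      _ = N * |(∫ x in (0:ℝ)..1, (p x - p α - p1 α * (x - α)) * W x)|
        + |p1 α| * |(N * M1)| + |N * ∫ x in (0:ℝ)..1, (x - α) * p1 x * W x| := by
          rw [abs_mul N (∫ x in (0:ℝ)..1, (p x - p α - p1 α * (x - α)) * W x),
            abs_mul (p1 α), abs_of_pos hN]
      _ ≤ _ := by nlinarith
  -- the remainder
  have s8 : |∫ x in (0:ℝ)..1, (φ x - (u0 / 2 * (x - α) ^ 2 + u1 / 3 * (x - α) ^ 3)) * W x|
      ≤ B * M4 := by
    have := wb (fun x => φ x - (u0 / 2 * (x - α) ^ 2 + u1 / 3 * (x - α) ^ 3))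
      (fun x => B * (x - α) ^ 4) (by fun_prop) (by fun_prop) hφ
    simp only [mul_assoc B] at this
    rwa [intervalIntegral.integral_const_mul] at this
  have e1 : N * (∫ x in (0:ℝ)..1, φ x * W x) - u0 / 2 * p α * m0 =
      u0 / 2 * (N * M2 - p α * m0) + u1 / 3 * (N * M3) +
      N * ∫ x in (0:ℝ)..1, (φ x - (u0 / 2 * (x - α) ^ 2 + u1 / 3 * (x - α) ^ 3)) * W x := by
    have : (∫ x in (0:ℝ)..1, φ x * W x) = u0 / 2 * M2 + u1 / 3 * M3 +
        ∫ x in (0:ℝ)..1, (φ x - (u0 / 2 * (x - α) ^ 2 + u1 / 3 * (x - α) ^ 3)) * W x := by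
      rw [hM2, hM3, ← intervalIntegral.integral_const_mul, ← intervalIntegral.integral_const_mul,
        ← intervalIntegral.integral_add (ii _ (by fun_prop)) (ii _ (by fun_prop)),
        ← intervalIntegral.integral_add (ii _ (by fun_prop)) (ii _ (by fun_prop))]
      congr 1; ext x; ring
    rw [this]; ring
  rw [e1]
  set R := ∫ x in (0:ℝ)..1, (φ x - (u0 / 2 * (x - α) ^ 2 + u1 / 3 * (x - α) ^ 3)) * W x
  have f1 : |u0| * |N * (N * M2 - p α * m0)| ≤ B * (5 * B ^ 2 * m0) := by gcongr
  have f2 : |u1| * |N * (N * M3)| ≤ B * (6 * B ^ 2 * m0) := by gcongr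
  have f3 : N * (N * |R|) ≤ B * (8 * B ^ 2 * m0) := by
    calc _ ≤ N * (N * (B * M4)) := by gcongr
      _ = B * (N * (N * M4)) := by ring
      _ ≤ _ := mul_le_mul_of_nonneg_left ((le_abs_self _).trans s4) hB
  calc _ = |u0 / 2 * (N * (N * M2 - p α * m0)) + u1 / 3 * (N * (N * M3)) + N * (N * R)| := by
        congr 1; ring
    _ ≤ |u0 / 2 * (N * (N * M2 - p α * m0))| + |u1 / 3 * (N * (N * M3))| + |N * (N * R)| :=
        abs_add_three _ _ _
    _ = |u0| / 2 * |(N * (N * M2 - p α * m0))| + |u1| / 3 * |(N * (N * M3))| + N * (N * |R|) := by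
        rw [abs_mul (u0 / 2), abs_mul (u1 / 3), abs_div, abs_div, abs_mul N (N * R), abs_mul N R,
          abs_of_pos hN, abs_of_pos (two_pos (α := ℝ)), abs_of_pos (three_pos (α := ℝ))]
    _ ≤ _ := by
        have : 0 ≤ B ^ 3 * m0 := by positivity
        nlinarith

lemma p_data (K c s : ℝ) (hc : 0 < c) (hK : 0 ≤ K) (hs : s ∈ Icc (0:ℝ) 1) (f2 f3 f4 : ℝ → ℝ)
    (h2 : ∀ x, HasDerivAt f2 (f3 x) x) (h3 : ∀ x, HasDerivAt f3 (f4 x) x) (h4 : Continuous f4)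
    (b2 : ∀ x ∈ Icc (0:ℝ) 1, |f2 x| ≤ K) (b3 : ∀ x ∈ Icc (0:ℝ) 1, |f3 x| ≤ K)
    (b4 : ∀ x ∈ Icc (0:ℝ) 1, |f4 x| ≤ K)
    (hh : ∀ x ∈ Icc (0:ℝ) 1, c ≤ 1 + s * (x * (1 - x) * f2 x)) :
    ∃ p p1 p2 : ℝ → ℝ, (∀ x, p x = x * (1 - x) * (1 + s * (x * (1 - x) * f2 x))⁻¹) ∧
      (∀ x ∈ Icc (0:ℝ) 1, HasDerivAt p (p1 x) x) ∧
      (∀ x ∈ Icc (0:ℝ) 1, HasDerivAt p1 (p2 x) x) ∧ ContinuousOn p2 (Icc 0 1) ∧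
      (∀ x ∈ Icc (0:ℝ) 1, |p x| ≤ K + 2 * c⁻¹ + 9 * K * c⁻¹ ^ 2 + 8 * K ^ 2 * c⁻¹ ^ 3) ∧
      (∀ x ∈ Icc (0:ℝ) 1, |p1 x| ≤ K + 2 * c⁻¹ + 9 * K * c⁻¹ ^ 2 + 8 * K ^ 2 * c⁻¹ ^ 3) ∧
      (∀ x ∈ Icc (0:ℝ) 1, |p2 x| ≤ K + 2 * c⁻¹ + 9 * K * c⁻¹ ^ 2 + 8 * K ^ 2 * c⁻¹ ^ 3) := by
  have cf2 : Continuous f2 := continuous_iff_continuousAt.2 fun x => (h2 x).continuousAt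
  have cf3 : Continuous f3 := continuous_iff_continuousAt.2 fun x => (h3 x).continuousAt
  set h : ℝ → ℝ := fun x => 1 + s * (x * (1 - x) * f2 x) with hh'
  set h1 : ℝ → ℝ := fun x => s * ((1 - 2 * x) * f2 x + x * (1 - x) * f3 x) with hh1
  set k2 : ℝ → ℝ := fun x =>
    s * (-2 * f2 x + 2 * (1 - 2 * x) * f3 x + x * (1 - x) * f4 x) with hk2
  have ch : Continuous h := by fun_prop
  have ch1 : Continuous h1 := by fun_prop
  have ck2 : Continuous k2 := by fun_prop
  have dq : ∀ x : ℝ, HasDerivAt (fun x : ℝ => x * (1 - x)) (1 - 2 * x) x := fun x => by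
    refine HasDerivAt.congr_deriv ((hasDerivAt_id' x).fun_mul ((hasDerivAt_id' x).const_sub 1)) ?_; ring
  have dq1 : ∀ x : ℝ, HasDerivAt (fun x : ℝ => 1 - 2 * x) (-2) x := fun x => by
    refine HasDerivAt.congr_deriv (((hasDerivAt_id' x).const_mul 2).const_sub 1) ?_; ring
  have dh : ∀ x, HasDerivAt h (h1 x) x := fun x => by
    refine HasDerivAt.congr_deriv ((((dq x).fun_mul (h2 x)).const_mul s).const_add 1) ?_
    rfl
  have dh1 : ∀ x, HasDerivAt h1 (k2 x) x := fun x => by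
    refine HasDerivAt.congr_deriv (((((dq1 x).fun_mul (h2 x)).fun_add ((dq x).fun_mul (h3 x))).const_mul s)) ?_
    simp only [hk2]; ring
  have hpos : ∀ x ∈ Icc (0:ℝ) 1, 0 < h x := fun x hx => hc.trans_le (hh x hx)
  set r : ℝ → ℝ := fun x => (h x)⁻¹ with hr
  have dr : ∀ x ∈ Icc (0:ℝ) 1, HasDerivAt r (-h1 x * r x ^ 2) x := fun x hx => by
    refine HasDerivAt.congr_deriv ((dh x).fun_inv (hpos x hx).ne') ?_
    simp only [hr]; field_simp
  have cr : ContinuousOn r (Icc 0 1) := fun x hx => (dr x hx).continuousAt.continuousWithinAt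
  have br : ∀ x ∈ Icc (0:ℝ) 1, |r x| ≤ c⁻¹ := fun x hx => by
    rw [abs_of_pos (inv_pos.2 (hpos x hx))]
    exact inv_anti₀ hc (hh x hx)
  set D := c⁻¹ with hD
  have D0 : 0 < D := inv_pos.2 hc
  have bq : ∀ x ∈ Icc (0:ℝ) 1, |x * (1 - x)| ≤ 1 := fun x hx => by
    rw [abs_le]; constructor <;> nlinarith [hx.1, hx.2]
  have bq1 : ∀ x ∈ Icc (0:ℝ) 1, |1 - 2 * x| ≤ 1 := fun x hx => by
    rw [abs_le]; constructor <;> linarith [hx.1, hx.2]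
  have bs : |s| ≤ 1 := by rw [abs_le]; constructor <;> linarith [hs.1, hs.2]
  have bh1 : ∀ x ∈ Icc (0:ℝ) 1, |h1 x| ≤ 2 * K := fun x hx => by
    have e2 := b2 x hx; have e3 := b3 x hx; have eq := bq x hx; have eq1 := bq1 x hx
    calc |h1 x| ≤ |s| * (|1 - 2 * x| * |f2 x| + |x * (1 - x)| * |f3 x|) := by
          simp only [hh1]; rw [abs_mul s, ← abs_mul (1 - 2 * x), ← abs_mul (x * (1 - x))]
          exact mul_le_mul_of_nonneg_left (abs_add_le _ _) (abs_nonneg s)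
      _ ≤ 1 * (1 * K + 1 * K) := by gcongr
      _ = _ := by ring
  have bk2 : ∀ x ∈ Icc (0:ℝ) 1, |k2 x| ≤ 5 * K := fun x hx => by
    have e2 := b2 x hx; have e3 := b3 x hx; have e4 := b4 x hx
    have eq := bq x hx; have eq1 := bq1 x hx
    calc |k2 x| ≤ |s| * (2 * |f2 x| + 2 * |1 - 2 * x| * |f3 x| + |x * (1 - x)| * |f4 x|) := by
          simp only [hk2]; rw [abs_mul s]; gcongr
          refine (abs_add_three _ _ _).trans (le_of_eq ?_)
          simp only [abs_mul, abs_neg, abs_two]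
      _ ≤ 1 * (2 * K + 2 * 1 * K + 1 * K) := by gcongr
      _ = _ := by ring
  refine ⟨fun x => x * (1 - x) * r x, fun x => (1 - 2 * x) * r x + x * (1 - x) * (-h1 x * r x ^ 2),
    fun x => -2 * r x + 2 * (1 - 2 * x) * (-h1 x * r x ^ 2) +
      x * (1 - x) * (-k2 x * r x ^ 2 + 2 * h1 x ^ 2 * r x ^ 3), fun x => rfl, fun x hx => ?_,
      fun x hx => ?_, ?_, fun x hx => ?_, fun x hx => ?_, fun x hx => ?_⟩
  · exact (dq x).fun_mul (dr x hx)
  · refine HasDerivAt.congr_deriv (((dq1 x).fun_mul (dr x hx)).fun_add ((dq x).fun_mul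
      (((dh1 x).fun_neg).fun_mul ((dr x hx).fun_pow 2)))) ?_
    push_cast
    ring
  · fun_prop
  · have := br x hx; have := bq x hx
    calc |x * (1 - x) * r x| ≤ 1 * D := by rw [abs_mul]; gcongr
      _ ≤ _ := by
        have : 0 ≤ 9 * K * D ^ 2 + 8 * K ^ 2 * D ^ 3 := by positivity
        linarith
  · have := br x hx; have := bq x hx; have := bq1 x hx; have := bh1 x hx
    calc _ ≤ |1 - 2 * x| * |r x| + |x * (1 - x)| * (|h1 x| * |r x| ^ 2) := by
          refine (abs_add_le _ _).trans (le_of_eq ?_)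
          simp only [abs_mul, abs_neg, abs_two, abs_pow]
      _ ≤ 1 * D + 1 * (2 * K * D ^ 2) := by gcongr
      _ ≤ _ := by
        have : 0 ≤ 7 * K * D ^ 2 + 8 * K ^ 2 * D ^ 3 := by positivity
        linarith
  · have := br x hx; have := bq x hx; have := bq1 x hx; have := bh1 x hx; have := bk2 x hx
    calc _ ≤ 2 * |r x| + 2 * |1 - 2 * x| * (|h1 x| * |r x| ^ 2) +
          |x * (1 - x)| * (|k2 x| * |r x| ^ 2 + 2 * |h1 x| ^ 2 * |r x| ^ 3) := by
          refine (abs_add_three _ _ _).trans ?_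
          rw [abs_mul (x * (1 - x))]
          gcongr
          · simp only [abs_mul, abs_neg, abs_two]; rfl
          · simp only [abs_mul, abs_neg, abs_two, abs_pow]; rfl
          · refine (abs_add_le _ _).trans (le_of_eq ?_)
            simp only [abs_mul, abs_neg, abs_two, abs_pow]
      _ ≤ 2 * D + 2 * 1 * (2 * K * D ^ 2) + 1 * (5 * K * D ^ 2 + 2 * (2 * K) ^ 2 * D ^ 3) := by
          gcongr
      _ ≤ _ := by nlinarith

lemma J_deriv (w φ : ℝ → ℝ) (N s0 : ℝ) (hN : 0 < N) (hw : ContinuousOn w (Icc 0 1))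
    (hw0 : ∀ x ∈ Icc (0:ℝ) 1, 0 ≤ w x) (hφ : Continuous φ) :
    HasDerivAt (fun s => ∫ x in (0:ℝ)..1, w x * Real.exp (-N * s * φ x))
      (∫ x in (0:ℝ)..1, -N * (φ x * (w x * Real.exp (-N * s0 * φ x)))) s0 := by
  have ii : ∀ g : ℝ → ℝ, ContinuousOn g (Icc 0 1) →
      IntervalIntegrable g MeasureTheory.volume 0 1 := fun g hg => by
    apply ContinuousOn.intervalIntegrable; rwa [uIcc_of_le zero_le_one]
  have sub : uIoc (0:ℝ) 1 ⊆ Icc 0 1 := by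
    rw [uIoc_of_le zero_le_one]; exact Ioc_subset_Icc_self
  have me : ∀ g : ℝ → ℝ, ContinuousOn g (Icc 0 1) →
      MeasureTheory.AEStronglyMeasurable g
        (MeasureTheory.volume.restrict (uIoc (0:ℝ) 1)) := fun g hg =>
    (hg.mono sub).aestronglyMeasurable measurableSet_uIoc
  refine (intervalIntegral.hasDerivAt_integral_of_dominated_loc_of_deriv_le
    (F := fun s x => w x * Real.exp (-N * s * φ x))
    (F' := fun s x => -N * (φ x * (w x * Real.exp (-N * s * φ x))))
    (bound := fun x => N * (|φ x| * (w x * Real.exp (N * (|s0| + 1) * |φ x|))))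
    (Metric.ball_mem_nhds s0 one_pos)
    (Eventually.of_forall fun s => me _ (by fun_prop)) (ii _ (by fun_prop)) (me _ (by fun_prop))
    (Eventually.of_forall fun x hx s hs => ?_) (ii _ (by fun_prop))
    (Eventually.of_forall fun x hx s hs => ?_)).2
  · have hw' := hw0 x (sub hx)
    rw [Real.norm_eq_abs, abs_mul, abs_mul, abs_mul, abs_neg, abs_of_pos hN, abs_of_nonneg hw',
      abs_of_pos (Real.exp_pos _)]
    have : -N * s * φ x ≤ N * (|s0| + 1) * |φ x| := by
      have h1 : |s| ≤ |s0| + 1 := by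
        have := abs_sub_abs_le_abs_sub s s0
        rw [Metric.mem_ball, Real.dist_eq] at hs
        linarith
      calc _ ≤ |-N * s * φ x| := le_abs_self _
        _ = N * |s| * |φ x| := by rw [abs_mul, abs_mul, abs_neg, abs_of_pos hN]
        _ ≤ _ := by gcongr
    gcongr
  · refine HasDerivAt.congr_deriv (((((hasDerivAt_id' s).const_mul (-N)).mul_const
      (φ x)).exp).const_mul (w x)) ?_
    ring

lemma W_deriv (N α s : ℝ) (φ f2 : ℝ → ℝ) (x : ℝ) (hx : x ∈ Ioo (0:ℝ) 1)
    (hφ : HasDerivAt φ ((x - α) * f2 x) x) :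
    HasDerivAt (fun x => x ^ (N * α) * (1 - x) ^ (N * (1 - α)) * Real.exp (-N * s * φ x))
      ((x ^ (N * α) * (1 - x) ^ (N * (1 - α)) * Real.exp (-N * s * φ x)) *
        (-N * (x - α) * (1 / (x * (1 - x)) + s * f2 x))) x := by
  have h0 : x ≠ 0 := hx.1.ne'
  have h1 : 1 - x ≠ 0 := by have := hx.2; intro h; linarith
  refine HasDerivAt.congr_deriv ((((hasDerivAt_id' x).rpow_const (p := N * α)
    (Or.inl h0)).fun_mul (((hasDerivAt_id' x).const_sub 1).rpow_const (p := N * (1 - α))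
    (Or.inl h1))).fun_mul ((hφ.const_mul (-N * s)).exp)) ?_
  rw [Real.rpow_sub_one h0, Real.rpow_sub_one h1]
  field_simp
  ring

lemma main_log (K c : ℝ) (hc : 0 < c) (hK : 0 ≤ K) (f f1 f2 f3 f4 : ℝ → ℝ)
    (d0 : ∀ x, HasDerivAt f (f1 x) x) (d1 : ∀ x, HasDerivAt f1 (f2 x) x)
    (d2 : ∀ x, HasDerivAt f2 (f3 x) x) (d3 : ∀ x, HasDerivAt f3 (f4 x) x) (h4 : Continuous f4)
    (b2 : ∀ x ∈ Icc (0:ℝ) 1, |f2 x| ≤ K) (b3 : ∀ x ∈ Icc (0:ℝ) 1, |f3 x| ≤ K)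
    (b4 : ∀ x ∈ Icc (0:ℝ) 1, |f4 x| ≤ K)
    (hh : ∀ x ∈ Icc (0:ℝ) 1, c ≤ 1 + x * (1 - x) * f2 x)
    (N α : ℝ) (hN : 0 < N) (hα : α ∈ Ioo (0:ℝ) 1) (φ : ℝ → ℝ)
    (hφ : φ = fun x => (x - α) * f1 x - (f x - f α)) (J : ℝ → ℝ)
    (hJ : J = fun s => ∫ x in (0:ℝ)..1,
      x ^ (N * α) * (1 - x) ^ (N * (1 - α)) * Real.exp (-N * s * φ x)) :
    0 < J 0 ∧ 0 < J 1 ∧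
    |Real.log (J 1) - Real.log (J 0) + 1 / 2 * Real.log (1 + α * (1 - α) * f2 α)| ≤
      13 * (K + 2 * c⁻¹ + 9 * K * c⁻¹ ^ 2 + 8 * K ^ 2 * c⁻¹ ^ 3) ^ 3 / N := by
  have hα' := Ioo_subset_Icc_self hα
  have cf : Continuous f := continuous_iff_continuousAt.2 fun x => (d0 x).continuousAt
  have cf1 : Continuous f1 := continuous_iff_continuousAt.2 fun x => (d1 x).continuousAt
  have cφ : Continuous φ := by rw [hφ]; fun_prop
  have dφ : ∀ x, HasDerivAt φ ((x - α) * f2 x) x := fun x => by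
    rw [hφ]
    refine HasDerivAt.congr_deriv ((((hasDerivAt_id' x).sub_const α).fun_mul (d1 x)).fun_sub
      ((d0 x).sub_const (f α))) ?_
    ring
  set B := K + 2 * c⁻¹ + 9 * K * c⁻¹ ^ 2 + 8 * K ^ 2 * c⁻¹ ^ 3 with hB
  have KB : K ≤ B := by
    have : 0 ≤ 2 * c⁻¹ + 9 * K * c⁻¹ ^ 2 + 8 * K ^ 2 * c⁻¹ ^ 3 := by positivity
    linarith
  have B0 : 0 ≤ B := hK.trans KB
  set w : ℝ → ℝ := fun x => x ^ (N * α) * (1 - x) ^ (N * (1 - α)) with hw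
  have e1 : 0 ≤ N * α := mul_nonneg hN.le hα.1.le
  have e2 : 0 ≤ N * (1 - α) := mul_nonneg hN.le (by linarith [hα.2])
  have cw : Continuous w :=
    (continuous_id.rpow_const fun _ => Or.inr e1).mul
      ((continuous_const.sub continuous_id).rpow_const fun _ => Or.inr e2)
  have w0 : ∀ x ∈ Icc (0:ℝ) 1, 0 ≤ w x := fun x hx =>
    mul_nonneg (Real.rpow_nonneg hx.1 _) (Real.rpow_nonneg (by linarith [hx.2]) _)
  have w0' : ∀ x ∈ Ioo (0:ℝ) 1, 0 < w x := fun x hx =>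
    mul_pos (Real.rpow_pos_of_pos hx.1 _) (Real.rpow_pos_of_pos (by linarith [hx.2]) _)
  have cW : ∀ s : ℝ, Continuous (fun x => w x * Real.exp (-N * s * φ x)) := fun s => by fun_prop
  have Jpos : ∀ s, 0 < J s := fun s => by
    rw [hJ]
    exact intervalIntegral.intervalIntegral_pos_of_pos_on ((cW s).intervalIntegrable _ _)
      (fun x hx => mul_pos (w0' x hx) (Real.exp_pos _)) one_pos
  have dJ : ∀ s, HasDerivAt J (-N * ∫ x in (0:ℝ)..1, φ x * (w x * Real.exp (-N * s * φ x))) s := by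
    intro s
    rw [hJ, ← intervalIntegral.integral_const_mul]
    exact J_deriv w φ N s hN cw.continuousOn w0 cφ
  have c1 : c ≤ 1 := by simpa using hh 0 ⟨le_rfl, zero_le_one⟩
  have hhs : ∀ s ∈ Icc (0:ℝ) 1, ∀ x ∈ Icc (0:ℝ) 1, c ≤ 1 + s * (x * (1 - x) * f2 x) := by
    intro s hs x hx
    have := hh x hx
    nlinarith [hs.1, hs.2, mul_le_mul_of_nonneg_left this hs.1,
      mul_le_mul_of_nonneg_left c1 (sub_nonneg.2 hs.2)]
  -- Taylor expansion of the phase difference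
  have tay2 : ∀ x ∈ Icc (0:ℝ) 1, |f2 x - f2 α - f3 α * (x - α)| ≤ B * |x - α| ^ 2 := by
    intro x hx
    have := mvt_bound (fun x => f2 x - f3 α * (x - α)) (fun x => f3 x - f3 α) α B 1 hα' B0
      (fun x hx => by
        simpa using (d2 x).fun_sub (((hasDerivAt_id x).sub_const α).const_mul (f3 α)))
      (fun x hx => by
        simpa using mvt_bound f3 f4 α B 0 hα' B0 (fun x _ => d3 x)
          (by simpa using fun x h h' => (b4 x ⟨h, h'⟩).trans KB) x hx) x hx
    simp only [sub_self, mul_zero, sub_zero, Nat.reduceAdd] at this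
    rwa [sub_right_comm]
  have tayφ : ∀ x ∈ Icc (0:ℝ) 1,
      |φ x - (f2 α / 2 * (x - α) ^ 2 + f3 α / 3 * (x - α) ^ 3)| ≤ B * (x - α) ^ 4 := by
    intro x hx
    have := mvt_bound (fun x => φ x - (f2 α / 2 * (x - α) ^ 2 + f3 α / 3 * (x - α) ^ 3))
      (fun x => (x - α) * (f2 x - f2 α - f3 α * (x - α))) α B 3 hα' B0
      (fun x hx => by
        refine HasDerivAt.congr_deriv ((dφ x).fun_sub (((((hasDerivAt_id' x).sub_const
          α).fun_pow 2).const_mul (f2 α / 2)).fun_add ((((hasDerivAt_id' x).sub_const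
          α).fun_pow 3).const_mul (f3 α / 3)))) ?_
        push_cast
        ring)
      (fun x hx => by
        rw [abs_mul, pow_succ' _ 2, mul_left_comm]
        exact mul_le_mul_of_nonneg_left (tay2 x hx) (abs_nonneg _)) x hx
    have z : φ α = 0 := by rw [hφ]; simp
    simpa [z, Even.pow_abs (show Even 4 by decide)] using this
  -- the derivative estimate
  have est : ∀ s ∈ Icc (0:ℝ) 1,
      |(-N * ∫ x in (0:ℝ)..1, φ x * (w x * Real.exp (-N * s * φ x))) / J s +
        1 / 2 * (α * (1 - α) * f2 α / (1 + s * (α * (1 - α) * f2 α)))| ≤ 13 * B ^ 3 / N := by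
    intro s hs
    obtain ⟨p, p1, p2, hp, dp, dp1, cp2, bp, bp1, bp2⟩ :=
      p_data K c s hc hK hs f2 f3 f4 d2 d3 h4 b2 b3 b4 (hhs s hs)
    have co := core N α B hN hα' p p1 p2 (fun x => w x * Real.exp (-N * s * φ x)) _ φ (f2 α) (f3 α)
      (cW s).continuousOn (fun x hx => mul_nonneg (w0 x hx) (Real.exp_pos _).le)
      (fun x hx => W_deriv N α s φ f2 x hx (dφ x))
      (fun x hx => by
        have h0 : x ≠ 0 := hx.1.ne'
        have h1 : 1 - x ≠ 0 := by have := hx.2; intro h; linarith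
        have h2 : 1 + s * (x * (1 - x) * f2 x) ≠ 0 :=
          (hc.trans_le (hhs s hs x (Ioo_subset_Icc_self hx))).ne'
        have : p x * (1 / (x * (1 - x)) + s * f2 x) = 1 := by
          rw [hp]
          have : 1 / (x * (1 - x)) + s * f2 x = (1 + s * (x * (1 - x) * f2 x)) / (x * (1 - x)) := by
            field_simp
          rw [this]
          generalize 1 + s * (x * (1 - x) * f2 x) = y at *
          field_simp
        simp only [hw]
        linear_combination (-N * (x - α) *
          (x ^ (N * α) * (1 - x) ^ (N * (1 - α)) * Real.exp (-N * s * φ x))) * this)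
      dp dp1 cp2 (by simp [hp]) (by simp [hp]) B0 bp bp1 bp2 ((b2 α hα').trans KB)
      ((b3 α hα').trans KB) cφ.continuousOn tayφ
    have eJ : (∫ x in (0:ℝ)..1, w x * Real.exp (-N * s * φ x)) = J s := by rw [hJ]
    rw [eJ] at co
    set I := ∫ x in (0:ℝ)..1, φ x * (w x * Real.exp (-N * s * φ x))
    have hJs := Jpos s
    have : -N * I / J s + 1 / 2 * (α * (1 - α) * f2 α / (1 + s * (α * (1 - α) * f2 α))) =
        -(N * (N * I - f2 α / 2 * p α * J s)) / (N * J s) := by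
      rw [hp]
      have h2 : 1 + s * (α * (1 - α) * f2 α) ≠ 0 := (hc.trans_le (hhs s hs α hα')).ne'
      generalize 1 + s * (α * (1 - α) * f2 α) = y at *
      field_simp
      ring
    rw [this, abs_div, abs_neg, abs_of_pos (mul_pos hN hJs), div_le_div_iff₀ (mul_pos hN hJs) hN]
    nlinarith
  refine ⟨Jpos 0, Jpos 1, ?_⟩
  have mv := (convex_Icc (0:ℝ) 1).norm_image_sub_le_of_norm_hasDerivWithin_le
    (f := fun s => Real.log (J s) + 1 / 2 * Real.log (1 + s * (α * (1 - α) * f2 α)))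
    (C := 13 * B ^ 3 / N)
    (fun s hs => by
      have h2 : 1 + s * (α * (1 - α) * f2 α) ≠ 0 := (hc.trans_le (hhs s hs α hα')).ne'
      have := ((dJ s).log (Jpos s).ne').fun_add (((((hasDerivAt_id' s).mul_const
        (α * (1 - α) * f2 α)).const_add 1).log h2).const_mul (1 / 2))
      rw [one_mul] at this
      exact this.hasDerivWithinAt)
    est (left_mem_Icc.2 zero_le_one) (right_mem_Icc.2 zero_le_one)
  simp only [one_mul, zero_mul, add_zero, Real.log_one, mul_zero, sub_zero, norm_one, mul_one,
    Real.norm_eq_abs] at mv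
  rwa [add_sub_right_comm] at mv

lemma GP_deriv (x : ℝ) (hx : x ∈ Ioo (0:ℝ) 1) :
    HasDerivAt GP (Real.log x - Real.log (1 - x)) x := by
  have h0 : x ≠ 0 := hx.1.ne'
  have h1 : 1 - x ≠ 0 := by have := hx.2; intro h; linarith
  unfold GP
  refine HasDerivAt.congr_deriv (((hasDerivAt_id' x).fun_mul (Real.hasDerivAt_log h0)).fun_add
    (((hasDerivAt_id' x).const_sub 1).fun_mul (((hasDerivAt_id' x).const_sub 1).log h1))) ?_
  field_simp
  ring

lemma iter2 (g g1 g2 : ℝ → ℝ) (s : Set ℝ) (hs : IsOpen s) (h : ∀ x ∈ s, HasDerivAt g (g1 x) x)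
    (h1 : ∀ x ∈ s, HasDerivAt g1 (g2 x) x) (x : ℝ) (hx : x ∈ s) : iteratedDeriv 2 g x = g2 x := by
  rw [iteratedDeriv_succ, iteratedDeriv_one]
  have : deriv g =ᶠ[nhds x] g1 := by
    filter_upwards [hs.mem_nhds hx] with y hy using (h y hy).deriv
  rw [this.deriv_eq]
  exact (h1 x hx).deriv

lemma GPg_iter2 (g g1 g2 : ℝ → ℝ) (h : ∀ x, HasDerivAt g (g1 x) x)
    (h1 : ∀ x, HasDerivAt g1 (g2 x) x) (x : ℝ) (hx : x ∈ Ioo (0:ℝ) 1) :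
    iteratedDeriv 2 (fun x => GP x + g x) x = 1 / (x * (1 - x)) + g2 x := by
  refine iter2 _ (fun x => (Real.log x - Real.log (1 - x)) + g1 x)
    (fun x => 1 / (x * (1 - x)) + g2 x) (Ioo 0 1) isOpen_Ioo
    (fun x hx => (GP_deriv x hx).fun_add (h x)) (fun x hx => ?_) x hx
  have h0 : x ≠ 0 := hx.1.ne'
  have h1' : 1 - x ≠ 0 := by have := hx.2; intro h; linarith
  refine HasDerivAt.congr_deriv (((Real.hasDerivAt_log h0).fun_sub
    (((hasDerivAt_id' x).const_sub 1).log h1')).fun_add (h1 x)) ?_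
  field_simp
  ring

lemma Qnorm_eq (g g1 : ℝ → ℝ) (h : ∀ x, HasDerivAt g (g1 x) x) (N : ℕ) (α : ℝ) :
    Qnorm (fun x => GP x + g x) N α = 2 * Real.pi * (Real.exp (-N * GP α) *
      ∫ x in (0:ℝ)..1, x ^ ((N:ℝ) * α) * (1 - x) ^ ((N:ℝ) * (1 - α)) *
        Real.exp (-N * 1 * ((x - α) * g1 x - (g x - g α)))) := by
  unfold Qnorm
  congr 1
  rw [← intervalIntegral.integral_const_mul]
  apply intervalIntegral.integral_congr_Ioo_of_le zero_le_one
  intro x hx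
  have h1' : 0 < 1 - x := by linarith [hx.2]
  simp only [Phase]
  rw [((GP_deriv x hx).fun_add (h x)).deriv, Real.rpow_def_of_pos hx.1, Real.rpow_def_of_pos h1',
    ← Real.exp_add, ← Real.exp_add, ← Real.exp_add]
  congr 1
  have : GP x = x * Real.log x + (1 - x) * Real.log (1 - x) := rfl
  rw [this]
  ring

lemma smooth_deriv (f : ℝ → ℝ) (hf : ContDiff ℝ (⊤ : ℕ∞) f) (k : ℕ) (x : ℝ) :
    HasDerivAt (iteratedDeriv k f) (iteratedDeriv (k + 1) f x) x := by
  rw [iteratedDeriv_succ]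
  exact ((hf.differentiable_iteratedDeriv k (by exact_mod_cast WithTop.coe_lt_top k)) x).hasDerivAt

lemma smooth_bound (f : ℝ → ℝ) (hf : ContDiff ℝ (⊤ : ℕ∞) f) (k : ℕ) :
    ∃ K : ℝ, 0 ≤ K ∧ ∀ x ∈ Icc (0:ℝ) 1, |iteratedDeriv k f x| ≤ K := by
  have hc : ContinuousOn (iteratedDeriv k f) (Icc 0 1) := fun x _ =>
    (smooth_deriv f hf k x).continuousAt.continuousWithinAt
  obtain ⟨C, hC⟩ := isCompact_Icc.exists_bound_of_continuousOn hc
  exact ⟨C, (norm_nonneg _).trans (hC 0 ⟨le_rfl, zero_le_one⟩), hC⟩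

lemma lower (f2 : ℝ → ℝ) (hf : Continuous f2)
    (h : ∀ x ∈ Ioo (0:ℝ) 1, 0 < 1 / (x * (1 - x)) + f2 x) :
    ∃ c : ℝ, 0 < c ∧ ∀ x ∈ Icc (0:ℝ) 1, c ≤ 1 + x * (1 - x) * f2 x := by
  obtain ⟨x0, hx0, hm⟩ := (isCompact_Icc (a := (0:ℝ)) (b := 1)).exists_isMinOn
    (nonempty_Icc.2 zero_le_one)
    (f := fun x => 1 + x * (1 - x) * f2 x) (by fun_prop)
  refine ⟨1 + x0 * (1 - x0) * f2 x0, ?_, fun x hx => hm hx⟩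
  rcases eq_or_ne x0 0 with r | r
  · simp [r]
  rcases eq_or_ne x0 1 with r1 | r1
  · simp [r1]
  have hx : x0 ∈ Ioo (0:ℝ) 1 := ⟨lt_of_le_of_ne hx0.1 (Ne.symm r), lt_of_le_of_ne hx0.2 r1⟩
  have h1' : 0 < 1 - x0 := by linarith [hx.2]
  have := mul_pos (mul_pos hx.1 h1') (h x0 hx)
  rw [mul_add, mul_one_div_cancel (mul_pos hx.1 h1').ne'] at this
  exact this

lemma final_alg (A c K h J0 J1 n : ℝ) (hA : 0 ≤ A) (hc : 0 < c) (hK : 0 ≤ K) (hch : c ≤ h)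
    (hhK : h ≤ 1 + K)
    (h0 : 0 < J0) (h1 : 0 < J1) (hn : 1 ≤ n)
    (hl : |Real.log J1 - Real.log J0 + 1 / 2 * Real.log h| ≤ A / n) :
    (1 + K) ^ (-(1:ℝ)/2) * Real.exp (-A) ≤ J1 / J0 ∧ J1 / J0 ≤ c ^ (-(1:ℝ)/2) * Real.exp A ∧
    |J1 / J0 - h ^ (-(1:ℝ)/2)| ≤ c ^ (-(1:ℝ)/2) * Real.exp A * A / n := by
  have hh : 0 < h := hc.trans_le hch
  set δ := Real.log J1 - Real.log J0 + 1 / 2 * Real.log h with hδ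
  have hAn : A / n ≤ A := div_le_self hA hn
  have e : J1 / J0 = h ^ (-(1:ℝ)/2) * Real.exp δ := by
    rw [Real.rpow_def_of_pos hh, ← Real.exp_add, ← Real.exp_log (div_pos h1 h0),
      Real.log_div h1.ne' h0.ne', hδ]
    congr 1; ring
  have u : h ^ (-(1:ℝ)/2) ≤ c ^ (-(1:ℝ)/2) := Real.rpow_le_rpow_of_nonpos hc hch (by norm_num)
  have l : (1 + K) ^ (-(1:ℝ)/2) ≤ h ^ (-(1:ℝ)/2) :=
    Real.rpow_le_rpow_of_nonpos hh hhK (by norm_num)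
  have hp : 0 < h ^ (-(1:ℝ)/2) := Real.rpow_pos_of_pos hh _
  have hl' := abs_le.1 hl
  rw [e]
  refine ⟨?_, ?_, ?_⟩
  · gcongr; linarith
  · gcongr; linarith
  · have : h ^ (-(1:ℝ)/2) * Real.exp δ - h ^ (-(1:ℝ)/2) = h ^ (-(1:ℝ)/2) * (Real.exp δ - 1) := by
      ring
    rw [this, abs_mul, abs_of_pos hp, mul_assoc, mul_div_assoc]
    have k : |Real.exp δ - 1| ≤ Real.exp A * A / n := by
      have a1 : Real.exp δ - 1 ≤ |δ| * Real.exp |δ| := by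
        have := Real.add_one_le_exp (-δ)
        have h2 : Real.exp δ * Real.exp (-δ) = 1 := by rw [← Real.exp_add]; simp
        have h3 : Real.exp δ - 1 ≤ δ * Real.exp δ := by nlinarith [Real.exp_pos δ]
        calc _ ≤ _ := h3
          _ ≤ |δ| * Real.exp δ := by gcongr; exact le_abs_self δ
          _ ≤ _ := by gcongr; exact le_abs_self δ
      have a2 : -(|δ| * Real.exp |δ|) ≤ Real.exp δ - 1 := by
        have := Real.add_one_le_exp δ
        have := neg_abs_le δ
        have := Real.one_le_exp (abs_nonneg δ)
        nlinarith [abs_nonneg δ]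
      calc _ ≤ |δ| * Real.exp |δ| := abs_le.2 ⟨a2, a1⟩
        _ ≤ A / n * Real.exp A := by gcongr; linarith
        _ = _ := by ring
    gcongr

set_option maxHeartbeats 1500000 in
theorem bergman_cp1_interior_asymptotics_of_q
    (f0 f1 : ℝ → ℝ) (hf0 : ContDiff ℝ (⊤ : ℕ∞) f0) (hf1 : ContDiff ℝ (⊤ : ℕ∞) f1)
    (hG0 : ∀ x ∈ Set.Ioo (0:ℝ) 1, 0 < iteratedDeriv 2 (Gt f0 f1 0) x)
    (hG1 : ∀ x ∈ Set.Ioo (0:ℝ) 1, 0 < iteratedDeriv 2 (Gt f0 f1 1) x) :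
    ∃ C : ℝ, 0 < C ∧
      ∀ N : ℕ, 1 ≤ N → ∀ t ∈ Set.Icc (0:ℝ) 1, ∀ α : ℝ,
        (N : ℝ) ^ (-(3:ℝ)/4) ≤ α → α ≤ 2/3 →
        1 / C ≤ Qnorm (Gt f0 f1 t) N α / Qnorm GP N α ∧
        Qnorm (Gt f0 f1 t) N α / Qnorm GP N α ≤ C ∧
        |Qnorm (Gt f0 f1 t) N α / Qnorm GP N α -
            (1 + α * (1 - α) *
              iteratedDeriv 2 (fun x => (1 - t) * f0 x + t * f1 x) α) ^ (-(1:ℝ)/2)|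
          ≤ C / ((N:ℝ) * α) ∧
        (1 + α * (1 - α) *
            iteratedDeriv 2 (fun x => (1 - t) * f0 x + t * f1 x) α) ^ (-(1:ℝ)/2) =
          (iteratedDeriv 2 GP α / iteratedDeriv 2 (Gt f0 f1 t) α) ^ ((1:ℝ)/2) := by
  have c20 : Continuous (iteratedDeriv 2 f0) := continuous_iff_continuousAt.2 fun x =>
    (smooth_deriv f0 hf0 2 x).continuousAt
  have c21 : Continuous (iteratedDeriv 2 f1) := continuous_iff_continuousAt.2 fun x =>
    (smooth_deriv f1 hf1 2 x).continuousAt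
  have c40 : Continuous (iteratedDeriv 4 f0) := continuous_iff_continuousAt.2 fun x =>
    (smooth_deriv f0 hf0 4 x).continuousAt
  have c41 : Continuous (iteratedDeriv 4 f1) := continuous_iff_continuousAt.2 fun x =>
    (smooth_deriv f1 hf1 4 x).continuousAt
  -- derivatives of the interpolated potential
  have der : ∀ (t : ℝ) (k : ℕ) (x : ℝ), HasDerivAt
      (fun x => (1 - t) * iteratedDeriv k f0 x + t * iteratedDeriv k f1 x)
      ((1 - t) * iteratedDeriv (k + 1) f0 x + t * iteratedDeriv (k + 1) f1 x) x := fun t k x =>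
    ((smooth_deriv f0 hf0 k x).const_mul (1 - t)).fun_add ((smooth_deriv f1 hf1 k x).const_mul t)
  have der0 : ∀ (t : ℝ) (x : ℝ), HasDerivAt
      (fun x => (1 - t) * f0 x + t * f1 x)
      ((1 - t) * iteratedDeriv 1 f0 x + t * iteratedDeriv 1 f1 x) x := fun t x => by
    simpa [iteratedDeriv_zero] using der t 0 x
  have itf : ∀ t x : ℝ, iteratedDeriv 2 (fun x => (1 - t) * f0 x + t * f1 x) x =
      (1 - t) * iteratedDeriv 2 f0 x + t * iteratedDeriv 2 f1 x := fun t x =>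
    iter2 _ _ (fun x => (1 - t) * iteratedDeriv 2 f0 x + t * iteratedDeriv 2 f1 x) univ isOpen_univ
      (fun x _ => der0 t x) (fun x _ => der t 1 x) x (mem_univ x)
  have itG : ∀ t : ℝ, ∀ x ∈ Ioo (0:ℝ) 1, iteratedDeriv 2 (Gt f0 f1 t) x =
      1 / (x * (1 - x)) + ((1 - t) * iteratedDeriv 2 f0 x + t * iteratedDeriv 2 f1 x) :=
    fun t x hx => GPg_iter2 _ _
      (fun x => (1 - t) * iteratedDeriv 2 f0 x + t * iteratedDeriv 2 f1 x)
      (der0 t) (der t 1) x hx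
  obtain ⟨c0, hc0, hl0⟩ := lower (iteratedDeriv 2 f0) c20 (fun x hx => by
    have := hG0 x hx; rw [itG 0 x hx] at this; simpa using this)
  obtain ⟨c1, hc1, hl1⟩ := lower (iteratedDeriv 2 f1) c21 (fun x hx => by
    have := hG1 x hx; rw [itG 1 x hx] at this; simpa using this)
  obtain ⟨K20, p20, k20⟩ := smooth_bound f0 hf0 2
  obtain ⟨K30, p30, k30⟩ := smooth_bound f0 hf0 3
  obtain ⟨K40, p40, k40⟩ := smooth_bound f0 hf0 4
  obtain ⟨K21, p21, k21⟩ := smooth_bound f1 hf1 2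
  obtain ⟨K31, p31, k31⟩ := smooth_bound f1 hf1 3
  obtain ⟨K41, p41, k41⟩ := smooth_bound f1 hf1 4
  set K := K20 + K30 + K40 + K21 + K31 + K41 with hKdef
  have hK : 0 ≤ K := by positivity
  set c := min c0 c1 with hcdef
  have hc : 0 < c := lt_min hc0 hc1
  have hcl : c ≤ c0 := min_le_left c0 c1
  have hcr : c ≤ c1 := min_le_right c0 c1
  have g20 : K20 ≤ K := by linarith
  have g30 : K30 ≤ K := by linarith
  have g40 : K40 ≤ K := by linarith
  have g21 : K21 ≤ K := by linarith
  have g31 : K31 ≤ K := by linarith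
  have g41 : K41 ≤ K := by linarith
  clear_value c K
  have conv : ∀ t ∈ Icc (0:ℝ) 1, ∀ a b : ℝ, |a| ≤ K → |b| ≤ K → |(1 - t) * a + t * b| ≤ K := by
    intro t ht a b ha hb
    have h1 : 0 ≤ 1 - t := by linarith [ht.2]
    calc _ ≤ |(1 - t) * a| + |t * b| := abs_add_le _ _
      _ = (1 - t) * |a| + t * |b| := by rw [abs_mul, abs_mul, abs_of_nonneg h1, abs_of_nonneg ht.1]
      _ ≤ (1 - t) * K + t * K := by
        have := ht.1
        gcongr
      _ = K := by ring
  set A := 13 * (K + 2 * c⁻¹ + 9 * K * c⁻¹ ^ 2 + 8 * K ^ 2 * c⁻¹ ^ 3) ^ 3 with hAdef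
  have hA : 0 ≤ A := by positivity
  have P1 : 0 < (1 + K) ^ (-(1:ℝ)/2) * Real.exp (-A) := by positivity
  have P2 : 0 < c ^ (-(1:ℝ)/2) * Real.exp A := by positivity
  set C := ((1 + K) ^ (-(1:ℝ)/2) * Real.exp (-A))⁻¹ + c ^ (-(1:ℝ)/2) * Real.exp A +
    c ^ (-(1:ℝ)/2) * Real.exp A * A with hC
  have P3 : 0 ≤ c ^ (-(1:ℝ)/2) * Real.exp A * A := by positivity
  have P4 := inv_pos.2 P1
  have C0 : 0 < C := by positivity
  have C1 : ((1 + K) ^ (-(1:ℝ)/2) * Real.exp (-A))⁻¹ ≤ C := by linarith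
  have C2 : c ^ (-(1:ℝ)/2) * Real.exp A ≤ C := by linarith
  have C3 : c ^ (-(1:ℝ)/2) * Real.exp A * A ≤ C := by linarith
  clear hC hAdef
  clear_value C
  refine ⟨C, C0, fun N hN t ht α hα1 hα2 => ?_⟩
  have hN1 : (1:ℝ) ≤ N := by exact_mod_cast hN
  have hN0 : (0:ℝ) < N := by linarith
  have α0 : 0 < α := lt_of_lt_of_le (Real.rpow_pos_of_pos hN0 _) hα1
  have α1 : α < 1 := by linarith
  have hα : α ∈ Ioo (0:ℝ) 1 := ⟨α0, α1⟩
  have hh : ∀ x ∈ Icc (0:ℝ) 1,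
      c ≤ 1 + x * (1 - x) * ((1 - t) * iteratedDeriv 2 f0 x + t * iteratedDeriv 2 f1 x) := by
    intro x hx
    have a0 : c ≤ _ := hcl.trans (hl0 x hx)
    have a1 : c ≤ _ := hcr.trans (hl1 x hx)
    have b0 := mul_le_mul_of_nonneg_left a0 (sub_nonneg.2 ht.2)
    have b1 := mul_le_mul_of_nonneg_left a1 ht.1
    calc c = (1 - t) * c + t * c := by ring
      _ ≤ _ := add_le_add b0 b1
      _ = _ := by ring
  have hb2 : ∀ x ∈ Icc (0:ℝ) 1,
      |(1 - t) * iteratedDeriv 2 f0 x + t * iteratedDeriv 2 f1 x| ≤ K := fun x hx =>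
    conv t ht _ _ ((k20 x hx).trans g20) ((k21 x hx).trans g21)
  obtain ⟨J0, J1, hlog⟩ := main_log K c hc hK (fun x => (1 - t) * f0 x + t * f1 x)
    (fun x => (1 - t) * iteratedDeriv 1 f0 x + t * iteratedDeriv 1 f1 x)
    (fun x => (1 - t) * iteratedDeriv 2 f0 x + t * iteratedDeriv 2 f1 x)
    (fun x => (1 - t) * iteratedDeriv 3 f0 x + t * iteratedDeriv 3 f1 x)
    (fun x => (1 - t) * iteratedDeriv 4 f0 x + t * iteratedDeriv 4 f1 x)
    (der0 t) (der t 1) (der t 2) (der t 3) (by fun_prop) hb2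
    (fun x hx => conv t ht _ _ ((k30 x hx).trans g30) ((k31 x hx).trans g31))
    (fun x hx => conv t ht _ _ ((k40 x hx).trans g40) ((k41 x hx).trans g41))
    hh N α hN0 hα _ rfl _ rfl
  have Qt := Qnorm_eq _ _ (der0 t) N α
  have QP := Qnorm_eq (fun _ => 0) (fun _ => 0) (fun x => hasDerivAt_const x 0) N α
  have eGP : (fun x => GP x + 0) = GP := by ext x; simp
  rw [eGP] at QP
  have eGt : (fun x => GP x + ((1 - t) * f0 x + t * f1 x)) = Gt f0 f1 t := rfl
  rw [eGt] at Qt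
  have hhK : 1 + α * (1 - α) * ((1 - t) * iteratedDeriv 2 f0 α + t * iteratedDeriv 2 f1 α)
      ≤ 1 + K := by
    have h1 := hb2 α (Ioo_subset_Icc_self hα)
    have h2 := (abs_le.1 h1).2
    have h3 : 0 ≤ α * (1 - α) := mul_nonneg α0.le (by linarith)
    have h4 : α * (1 - α) ≤ 1 := mul_le_one₀ α1.le (by linarith) (by linarith)
    have h5 := (mul_le_mul_of_nonneg_left h2 h3).trans (mul_le_of_le_one_left hK h4)
    linarith
  have fin := final_alg A c K _ _ _ N hA hc hK (hh α (Ioo_subset_Icc_self hα)) hhK J0 J1 hN1 hlog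
  have aux : ∀ a b d e : ℝ, 0 < d → 0 < e → d * (e * a) / (d * (e * b)) = a / b :=
    fun a b d e hd he => by
      rw [mul_div_mul_left _ _ hd.ne', mul_div_mul_left _ _ he.ne']
  have hq := aux _ _ _ _ Real.two_pi_pos (Real.exp_pos (-N * GP α)) ▸ congrArg₂ (· / ·) Qt QP
  simp only [mul_zero, zero_mul, sub_zero] at hq fin
  rw [← hq] at fin
  obtain ⟨F1, F2, F3⟩ := fin
  refine ⟨?_, F2.trans C2, ?_, ?_⟩
  · refine le_trans ?_ F1
    rw [one_div]
    exact inv_le_of_inv_le₀ P1 C1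
  · rw [itf]
    refine F3.trans ?_
    have : (N:ℝ) * α ≤ N := mul_le_of_le_one_right hN0.le α1.le
    have hNα : 0 < (N:ℝ) * α := by positivity
    exact div_le_div₀ C0.le C3 hNα this
  · have hhp := hc.trans_le (hh α (Ioo_subset_Icc_self hα))
    have hGP : iteratedDeriv 2 GP α = 1 / (α * (1 - α)) := by
      have := GPg_iter2 (fun _ => 0) (fun _ => 0) (fun _ => 0) (fun x => hasDerivAt_const x 0)
        (fun x => hasDerivAt_const x 0) α hα
      rwa [eGP, add_zero] at this
    rw [itf, itG t α hα, hGP]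
    have hq0 : 0 < α * (1 - α) := mul_pos α0 (by linarith)
    have : 1 / (α * (1 - α)) / (1 / (α * (1 - α)) +
        ((1 - t) * iteratedDeriv 2 f0 α + t * iteratedDeriv 2 f1 α)) =
        (1 + α * (1 - α) * ((1 - t) * iteratedDeriv 2 f0 α + t * iteratedDeriv 2 f1 α))⁻¹ := by
      generalize (1 - t) * iteratedDeriv 2 f0 α + t * iteratedDeriv 2 f1 α = u at *
      generalize α * (1 - α) = v at *
      have : 1 / v + u = (1 + v * u) / v := by field_simp
      rw [this]
      field_simp
    rw [this, Real.inv_rpow hhp.le, neg_div, Real.rpow_neg hhp.le]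
end
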